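/- Big Gaps Theorem: for every clockable ordinal α there is an ordinal β such that no ordinal δ with β ≤ δ < β + α is clockable, while some clockable ordinal is greater than or equal to β + α; that is, below the clockable ordinals there are gaps of size at least α. -/

import Mathlib

open scoped Classical

namespace ITTM

/-- A real is an element of Cantor space. -/
abbrev R := ℕ → Bool

/-- The constant-zero real. -/
def zeroR : R := fun _ => false

/-- The real ⟨1,0,0,...⟩ coding the answer "Yes". -/
def oneR : R := fun n => decide (n = 0)

/-- The real coding a natural number `p`: `p` ones followed by zeros. -/
def natR (p : ℕ) : R := fun n => decide (n < p)

/-- The real coding the pair of reals `(y, z)`. -/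
def pairR (y z : R) : R := fun n => if n % 2 = 0 then y (n / 2) else z (n / 2)

/-- A snapshot of an infinite time Turing machine computation with state set
`Fin (Q+1)`: the current state, the head position, and the contents of the
three tapes (tape 0 is the input tape, tape 1 the scratch tape, tape 2 the
output tape); cells hold values in `Bool` (`true` = 1, `false` = 0). -/
structure Snapshot (Q : ℕ) where
  state : Fin (Q + 1)
  head : ℕ
  tape : Fin 3 → ℕ → Bool

/-- An infinite time Turing machine program: a finite set of states
`Fin (Q+1)` with distinguished start, limit and halt states, and a finite
transition table which, given the current state and the three cell values
read by the head, specifies the next state, the three values to write, and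
the direction to move (`true` = right, `false` = left). -/
structure Machine where
  Q : ℕ
  start : Fin (Q + 1)
  limit : Fin (Q + 1)
  halt : Fin (Q + 1)
  trans : Fin (Q + 1) × (Fin 3 → Bool) → Fin (Q + 1) × (Fin 3 → Bool) × Bool

instance : Inhabited Machine := ⟨⟨0, 0, 0, 0, fun _ => (0, fun _ => false, true)⟩⟩

namespace Machine

/-- The initial snapshot on input `x`: head on cell 0 in the start state, `x`
on the input tape, the other tapes filled with zeros. -/
def init (M : Machine) (x : R) : Snapshot M.Q where
  state := M.start
  head := 0
  tape := fun i n => if i = 0 then x n else false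

/-- One step of computation applied to a snapshot. -/
def stepSnap (M : Machine) (s : Snapshot M.Q) : Snapshot M.Q :=
  let t := M.trans (s.state, fun i => s.tape i s.head)
  { state := t.1
    head := if t.2.2 then s.head + 1 else s.head - 1
    tape := fun i n => if n = s.head then t.2.1 i else s.tape i n }

/-- The snapshot of the computation of machine `M` on input `x` at ordinal
stage `α`, defined by transfinite recursion: at stage 0 the initial snapshot,
at successor stages the transition table is applied, and at limit stages the
head is on cell 0 in the limit state and each cell holds the `limsup` of its
earlier values (1 iff its value was 1 cofinally often below the limit). -/
noncomputable def snap (M : Machine) (x : R) : Ordinal.{0} → Snapshot M.Q :=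
  WellFounded.fix Ordinal.lt_wf fun α ih =>
    if _h0 : α = 0 then M.init x
    else if hs : ∃ β, β < α ∧ α = β + 1 then
      M.stepSnap (ih hs.choose hs.choose_spec.1)
    else
      { state := M.limit
        head := 0
        tape := fun i n =>
          decide (∀ β < α, ∃ γ, β ≤ γ ∧ ∃ hγ : γ < α, (ih γ hγ).tape i n = true) }

/-- The machine is in the halt state at stage `α`. -/
def haltedAt (M : Machine) (x : R) (α : Ordinal) : Prop :=
  (M.snap x α).state = M.halt

/-- The computation of `M` on input `x` halts exactly at stage `α`: stage `α`
is the first stage at which the machine is in the halt state. -/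
def haltsAt (M : Machine) (x : R) (α : Ordinal) : Prop :=
  M.haltedAt x α ∧ ∀ β < α, ¬ M.haltedAt x β

/-- The computation of `M` on input `x` halts. -/
def halts (M : Machine) (x : R) : Prop := ∃ α, M.haltedAt x α

/-- The computation of `M` on input `x` halts with output `y`: at the first
stage at which the machine is in the halt state, the output tape reads `y`. -/
def outputs (M : Machine) (x y : R) : Prop :=
  ∃ α, M.haltsAt x α ∧ (M.snap x α).tape 2 = y

end Machine

/-- Machines are coded by natural numbers. -/
noncomputable instance : Encodable Machine :=
  Encodable.ofEquiv
    (Σ Q : ℕ, (Fin (Q + 1) × Fin (Q + 1) × Fin (Q + 1)) ×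
      ((Fin (Q + 1) × (Fin 3 → Bool)) → Fin (Q + 1) × (Fin 3 → Bool) × Bool))
    { toFun := fun M => ⟨M.Q, (M.start, M.limit, M.halt), M.trans⟩
      invFun := fun s => ⟨s.1, s.2.1.1, s.2.1.2.1, s.2.1.2.2, s.2.2⟩
      left_inv := fun _ => rfl
      right_inv := fun _ => rfl }

/-- The machine coded by the natural number `p`; every natural number codes a
machine, and every machine is coded by some natural number. -/
noncomputable def prog (p : ℕ) : Machine :=
  ((Encodable.decode p : Option Machine)).getD default

/-- `φ_p(x)` halts with output `y`. -/
noncomputable def phiOutputs (p : ℕ) (x y : R) : Prop := (prog p).outputs x y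

/-- A set of reals is infinite time decidable when some machine, on any input
`x`, halts with output ⟨1,0,0,...⟩ if `x ∈ A` and output ⟨0,0,0,...⟩ if
`x ∉ A`. -/
def ITTMDecidable (A : Set R) : Prop :=
  ∃ M : Machine, ∀ x : R, (x ∈ A → M.outputs x oneR) ∧ (x ∉ A → M.outputs x zeroR)

/-- A set of reals is infinite time semi-decidable when it is the halting set
of some machine. -/
def ITTMSemiDecidable (A : Set R) : Prop :=
  ∃ M : Machine, A = {x : R | M.halts x}

/-- The binary relation on ℕ coded by the real `x`:
`n ◁ k ⟺ x(⟨n,k⟩) = 1` where `⟨·,·⟩` is the pairing function. -/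
def rel (x : R) (n k : ℕ) : Prop := x (Nat.pair n k) = true

/-- The field of the relation coded by `x`. -/
def field (x : R) : Set ℕ := {n | ∃ k, rel x n k ∨ rel x k n}

/-- The relation coded by `x`, restricted to its field. -/
def relOn (x : R) : field x → field x → Prop := fun a b => rel x a.1 b.1

/-- The real `x` codes a well-order of (a subset of) ℕ, namely its field. -/
def codesWellOrder (x : R) : Prop := IsWellOrder (field x) (relOn x)

/-- The set of reals coding well-orders. -/
def WO : Set R := {x | codesWellOrder x}

/-- The real `x` codes a well-order of order type `α`. -/
def codesOrdinal (x : R) (α : Ordinal) : Prop :=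
  ∃ h : codesWellOrder x, @Ordinal.type _ (relOn x) h = α

/-- An ordinal is clockable when some machine on input 0 halts exactly at
stage `α`. -/
def Clockable (α : Ordinal) : Prop := ∃ M : Machine, M.haltsAt zeroR α

/-- A real is writable when it is the output of some machine on input 0. -/
def WritableReal (x : R) : Prop := ∃ M : Machine, M.outputs zeroR x

/-- An ordinal is writable when some writable real codes a well-order of that
order type. -/
def WritableOrdinal (α : Ordinal) : Prop :=
  ∃ x : R, WritableReal x ∧ codesOrdinal x α

/-- A real is eventually writable when some machine on input 0 never halts,
but from some stage onward the content of its output tape is exactly `x`. -/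
def EventuallyWritableReal (x : R) : Prop :=
  ∃ M : Machine, ¬ M.halts zeroR ∧ ∃ α : Ordinal, ∀ β ≥ α, (M.snap zeroR β).tape 2 = x

/-- An ordinal is eventually writable when some eventually writable real codes
a well-order of that order type. -/
def EventuallyWritableOrdinal (α : Ordinal) : Prop :=
  ∃ x : R, EventuallyWritableReal x ∧ codesOrdinal x α

end ITTM

/-!
Run a machine halting at stage `α` as a clock, jointly with all machines at once, and restart it
each time it has halted. The joint run halts as soon as the clock runs out and no other machine has
halted for the first time since the clock was started. This eventually happens, because there are
only countably many machines, so that from some stage on none of them halts for the first time any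
more. If the last run of the clock started at stage `β`, no ordinal in `[β, β + α)` is clockable.

The joint run is not itself the computation of a machine. It is simulated by one through a chain of
simpler and simpler models of computation. As a simulation never overtakes the simulated run, the
final machine halts at or after stage `β + α`.
-/

namespace ITTM

/-! ### Simulations between transfinite systems -/

universe u

/-- The `limsup` below `o` of an ordinal-indexed sequence of bits. -/
noncomputable def limsupBit (o : Ordinal.{0}) (f : Ordinal.{0} → Bool) : Bool :=
  decide (∀ β < o, ∃ γ ∈ Set.Ico β o, f γ = true)

section limsupBit

variable {o : Ordinal.{0}} {f g : Ordinal.{0} → Bool}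

theorem limsupBit_eq_true :
    limsupBit o f = true ↔ ∀ β < o, ∃ γ ∈ Set.Ico β o, f γ = true := by
  simp [limsupBit]

theorem limsupBit_congr {β : Ordinal} (hβ : β < o) (h : ∀ γ ∈ Set.Ico β o, f γ = g γ) :
    limsupBit o f = limsupBit o g := by
  have transfer {f g : Ordinal.{0} → Bool} (h : ∀ γ ∈ Set.Ico β o, f γ = g γ)
      (hf : limsupBit o f = true) : limsupBit o g = true := by
    refine limsupBit_eq_true.2 fun β' hβ' => ?_
    obtain ⟨γ, hγ, hfγ⟩ := limsupBit_eq_true.1 hf (max β β') (max_lt hβ hβ')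
    obtain ⟨hβγ, hβ'γ⟩ := max_le_iff.1 hγ.1
    exact ⟨γ, ⟨hβ'γ, hγ.2⟩, by rw [← h γ ⟨hβγ, hγ.2⟩, hfγ]⟩
  exact Bool.eq_iff_iff.2 ⟨transfer h, transfer fun γ hγ => (h γ hγ).symm⟩

theorem limsupBit_const (ho : o ≠ 0) (v : Bool) : limsupBit o (fun _ => v) = v := by
  cases v
  · simpa [limsupBit] using ⟨0, pos_iff_ne_zero.2 ho⟩
  · exact limsupBit_eq_true.2 fun β hβ => ⟨β, ⟨le_rfl, hβ⟩, rfl⟩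

theorem limsupBit_of_eventually {β : Ordinal} (hβ : β < o) {v : Bool}
    (h : ∀ γ ∈ Set.Ico β o, f γ = v) : limsupBit o f = v := by
  rw [limsupBit_congr hβ h, limsupBit_const (pos_of_gt hβ).ne']

theorem limsupBit_add (ho : Order.IsSuccLimit o) (η : Ordinal) (f : Ordinal → Bool) :
    limsupBit (η + o) f = limsupBit o fun γ => f (η + γ) := by
  rw [Bool.eq_iff_iff, limsupBit_eq_true, limsupBit_eq_true]
  constructor
  · intro h β hβ
    obtain ⟨γ, ⟨hβγ, hγo⟩, hfγ⟩ := h (η + β) (by gcongr)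
    obtain ⟨δ, rfl⟩ := le_iff_exists_add.1 (le_self_add.trans hβγ)
    exact ⟨δ, ⟨by simpa using hβγ, by simpa using hγo⟩, hfγ⟩
  · intro h β hβ
    have hβo : β - η < o := (Ordinal.sub_lt_of_lt_add hβ ho.bot_lt)
    obtain ⟨γ, ⟨hβγ, hγo⟩, hfγ⟩ := h (β - η) hβo
    exact ⟨η + γ, ⟨(Ordinal.le_add_sub β η).trans (by gcongr), by gcongr⟩, hfγ⟩

end limsupBit

/-- A transfinite dynamical system: configurations evolve by `step` at successor stages, and at a
limit stage the new configuration is computed by `lim` from the `limsup` of observable bits. -/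
structure System : Type (u + 1) where
  Cfg : Type u
  Cell : Type u
  step : Cfg → Cfg
  bit : Cfg → Cell → Bool
  lim : (Cell → Bool) → Cfg
  Halted : Cfg → Prop

namespace System

/-- The configuration at stage `o` of the run starting with `x`. -/
noncomputable def run (S : System) (x : S.Cfg) (o : Ordinal.{0}) : S.Cfg :=
  Ordinal.limitRecOn o x (fun _ y => S.step y) fun o _ ih =>
    S.lim fun i => decide (∀ β < o, ∃ γ, ∃ hγ : γ ∈ Set.Ico β o, S.bit (ih γ hγ.2) i = true)

/-- The run starting with `x` halts for the first time at stage `o`. -/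
def HaltsAt (S : System) (x : S.Cfg) (o : Ordinal.{0}) : Prop :=
  S.Halted (S.run x o) ∧ ∀ o' < o, ¬ S.Halted (S.run x o')

section run

variable (S : System) (x : S.Cfg)

@[simp] theorem run_zero : S.run x 0 = x := by
  simp [run]

@[simp] theorem run_add_one (o : Ordinal) : S.run x (o + 1) = S.step (S.run x o) := by
  simp [run]

@[simp] theorem run_one : S.run x 1 = S.step x := by
  rw [← zero_add (1 : Ordinal), run_add_one, run_zero]

theorem run_limit {o : Ordinal} (ho : Order.IsSuccLimit o) :
    S.run x o = S.lim fun i => limsupBit o fun γ => S.bit (S.run x γ) i := by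
  rw [run, Ordinal.limitRecOn_limit _ _ _ _ ho]
  simp only [limsupBit, exists_prop]
  rfl

theorem run_add (η ζ : Ordinal) : S.run x (η + ζ) = S.run (S.run x η) ζ := by
  induction ζ using Ordinal.limitRecOn with
  | zero => simp
  | add_one ζ ih => rw [← add_assoc, run_add_one, run_add_one, ih]
  | limit o ho ih =>
    rw [run_limit _ _ ho, run_limit _ _ (Ordinal.isSuccLimit_add η ho)]
    congr 1
    funext i
    rw [limsupBit_add ho]
    exact limsupBit_congr ho.bot_lt fun γ hγ => by rw [ih γ hγ.2]

end run

variable {S C : System}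

/-- Some possibly transfinite run leads from `y` to `z`, and all configurations on the way, except
possibly `z` itself, satisfy `P`. -/
def Reaches (S : System) (P : S.Cfg → Prop) (y z : S.Cfg) : Prop :=
  ∃ ν, S.run y ν = z ∧ ∀ ζ < ν, P (S.run y ζ)

theorem forall_run_lt_add {P : S.Cfg → Prop} {y : S.Cfg} {ν μ : Ordinal}
    (hν : ∀ ζ < ν, P (S.run y ζ)) (hμ : ∀ ζ < μ, P (S.run (S.run y ν) ζ)) :
    ∀ ζ < ν + μ, P (S.run y ζ) := by
  intro ζ hζ
  obtain hlt | hle := lt_or_ge ζ ν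
  · exact hν ζ hlt
  · obtain ⟨δ, rfl⟩ := le_iff_exists_add.1 hle
    rw [run_add]
    exact hμ δ (by simpa using hζ)

namespace Reaches

variable {P P' : S.Cfg → Prop} {y z u : S.Cfg}

theorem refl (y : S.Cfg) : S.Reaches P y y := ⟨0, by simp⟩

theorem single (hy : P y) : S.Reaches P y (S.step y) := ⟨1, by simpa⟩

theorem trans (hyz : S.Reaches P y z) (hzu : S.Reaches P z u) : S.Reaches P y u := by
  obtain ⟨ν, rfl, hν⟩ := hyz
  obtain ⟨μ, rfl, hμ⟩ := hzu
  exact ⟨ν + μ, S.run_add y ν μ, forall_run_lt_add hν hμ⟩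

theorem head (hy : P y) (h : S.Reaches P (S.step y) z) : S.Reaches P y z :=
  (single hy).trans h

theorem head_eq (hy : P y) (hz : S.step y = z) (h : S.Reaches P z u) : S.Reaches P y u :=
  .head hy (hz ▸ h)

theorem tail (h : S.Reaches P y z) (hz : P z) : S.Reaches P y (S.step z) :=
  h.trans (single hz)

theorem mono (hP : ∀ y, P y → P' y) (h : S.Reaches P y z) : S.Reaches P' y z :=
  h.imp fun _ hν => hν.imp_right fun hP' ζ hζ => hP _ (hP' ζ hζ)

theorem exists_pos (hy : P y) (h : S.Reaches P (S.step y) z) :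
    ∃ ν > 0, S.run y ν = z ∧ ∀ ζ < ν, P (S.run y ζ) := by
  obtain ⟨ν, rfl, hν⟩ := h
  refine ⟨1 + ν, zero_lt_one.trans_le le_self_add, by simp [run_add], ?_⟩
  exact forall_run_lt_add (by simpa) (by simpa)

theorem exists_pos_step (h : S.Reaches P y z) (hz : P z) :
    ∃ ν > 0, S.run y ν = S.step z ∧ ∀ ζ < ν, P (S.run y ζ) := by
  obtain ⟨ν, rfl, hν⟩ := h
  refine ⟨ν + 1, zero_le.trans_lt (lt_add_one ν), run_add_one .., ?_⟩
  exact forall_run_lt_add hν (by simpa)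

theorem exists_haltsAt (h : S.Reaches (¬ S.Halted ·) y z) (hz : S.Halted z) :
    ∃ ν, S.HaltsAt y ν := by
  obtain ⟨ν, rfl, hν⟩ := h
  exact ⟨ν, hz, hν⟩

end Reaches

theorem exists_mem_Ico_of_lt_iSup {τ : ℕ → Ordinal.{0}} (h0 : τ 0 = 0) {ζ : Ordinal.{0}}
    (hζ : ζ < ⨆ n, τ n) : ∃ n, ζ ∈ Set.Ico (τ n) (τ (n + 1)) := by
  have hex : ∃ n, ζ < τ n := Ordinal.lt_iSup_iff.1 hζ
  cases hn : Nat.find hex with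
  | zero => exact absurd (Nat.find_spec hex) (by simp [hn, h0])
  | succ n => exact ⟨n, not_lt.1 (Nat.find_min hex (by omega)), hn ▸ Nat.find_spec hex⟩

theorem isSuccLimit_iSup_of_strictMono {τ : ℕ → Ordinal.{0}} (hτ : StrictMono τ) :
    Order.IsSuccLimit (⨆ n, τ n) := by
  have hlub : IsLUB (Set.range τ) (⨆ n, τ n) := isLUB_ciSup Ordinal.bddAbove_of_small
  have hlt n : τ n < ⨆ n, τ n := (hτ n.lt_succ_self).trans_le (hlub.1 ⟨_, rfl⟩)
  exact hlub.isSuccLimit_of_notMem (Set.range_nonempty τ) fun ⟨n, hn⟩ => (hlt n).ne hn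

theorem exists_run_eq_lim {y : ℕ → S.Cfg} {Q : ℕ → S.Cfg → Prop}
    (h : ∀ n, ∃ ν > 0, S.run (y n) ν = y (n + 1) ∧ ∀ ζ < ν, Q n (S.run (y n) ζ))
    {b : S.Cell → Bool} (hb : ∀ i, ∃ N, ∀ n ≥ N, ∀ z, Q n z → S.bit z i = b i) :
    ∃ ν, S.run (y 0) ν = S.lim b ∧ (∀ ζ < ν, ∃ n, Q n (S.run (y 0) ζ)) ∧
      ∀ n, ∃ ζ < ν, S.run (y 0) ζ = y n := by
  choose ν hpos hrun hQ using h
  let τ (n : ℕ) : Ordinal := n.rec 0 fun n t => t + ν n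
  have hτ : StrictMono τ := strictMono_nat_of_lt_succ fun n => by simpa [τ] using hpos n
  have hτrun n : S.run (y 0) (τ n) = y n := by
    induction n with
    | zero => simp [τ]
    | succ n ih => rw [show τ (n + 1) = τ n + ν n from rfl, run_add, ih, hrun]
  have hτQ {n : ℕ} {ζ} (hζ : ζ ∈ Set.Ico (τ n) (τ (n + 1))) : Q n (S.run (y 0) ζ) := by
    obtain ⟨δ, rfl⟩ := le_iff_exists_add.1 hζ.1
    rw [run_add, hτrun]
    exact hQ n δ (by simpa [τ] using hζ.2)
  have hlim : Order.IsSuccLimit (⨆ n, τ n) := isSuccLimit_iSup_of_strictMono hτ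
  have hlt n : τ n < ⨆ n, τ n :=
    (hτ n.lt_succ_self).trans_le (le_ciSup Ordinal.bddAbove_of_small _)
  refine ⟨_, ?_, fun ζ hζ => ?_, fun n => ⟨τ n, hlt n, hτrun n⟩⟩
  · rw [run_limit _ _ hlim]
    congr 1
    funext i
    obtain ⟨N, hN⟩ := hb i
    refine limsupBit_of_eventually (hlt N) fun γ hγ => ?_
    obtain ⟨n, hn⟩ := exists_mem_Ico_of_lt_iSup rfl hγ.2
    have hNn : N ≤ n := Nat.lt_succ_iff.1 (hτ.lt_iff_lt.1 (hγ.1.trans_lt hn.2))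
    exact hN n hNn _ (hτQ hn)
  · obtain ⟨n, hn⟩ := exists_mem_Ico_of_lt_iSup rfl hζ
    exact ⟨n, hτQ hn⟩

/-- The configuration `y` of `C` has not halted, and each of its cells that represents a cell of
`S` holds the value of that cell in `x` or its value in `x'`. -/
def Between (S C : System) (cell : S.Cell → C.Cell) (x x' : S.Cfg) (y : C.Cfg) : Prop :=
  ¬ C.Halted y ∧ ∀ i, C.bit y (cell i) = S.bit x i ∨ C.bit y (cell i) = S.bit x' i

/-- A simulation of the run of `S` from `x₀` by the run of `C` from `y₀`. A step of `S` becomes a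
nonempty run of `C`, during which the represented cells only hold old or new values, so that no
spurious bits enter the `limsup`. After the start and after each limit stage, `C` may first run
for a while to set up the representation. The cells in `flags` are set during every simulated
step and hence at every limit of simulated steps, which lets `C` recognize these limits. -/
structure Simulation (S C : System) (x₀ : S.Cfg) (y₀ : C.Cfg) where
  Rep : S.Cfg → C.Cfg → Prop
  cell : S.Cell → C.Cell
  flags : Set C.Cell
  bit_eq : ∀ {x y}, Rep x y → ∀ i, C.bit y (cell i) = S.bit x i
  start : ∃ y, Rep x₀ y ∧ C.Reaches (S.Between C cell x₀ x₀) y₀ y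
  step : ∀ {x y}, Rep x y → ¬ S.Halted x →
    ∃ ν > 0, Rep (S.step x) (C.run y ν) ∧
      (∀ ζ < ν, S.Between C cell x (S.step x) (C.run y ζ)) ∧
      ∀ f ∈ flags, ∃ ζ < ν, C.bit (C.run y ζ) f = true
  limit : ∀ b : C.Cell → Bool, (∀ f ∈ flags, b f = true) →
    ∃ y, Rep (S.lim (b ∘ cell)) y ∧
      C.Reaches (S.Between C cell (S.lim (b ∘ cell)) (S.lim (b ∘ cell))) (C.lim b) y
  halt : ∀ {x y}, Rep x y → S.Halted x → ∃ ν, C.HaltsAt y ν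

namespace Simulation

variable {x₀ : S.Cfg} {y₀ : C.Cfg} (M : Simulation S C x₀ y₀)

/-- The configuration `y` represents `x`, possibly after some preparation by `C`. -/
def EventuallyRep (x : S.Cfg) (y : C.Cfg) : Prop :=
  ∃ z, M.Rep x z ∧ C.Reaches (S.Between C M.cell x x) y z

variable {M} in
theorem EventuallyRep.bit_eq {x : S.Cfg} {y : C.Cfg} (h : M.EventuallyRep x y) (i : S.Cell) :
    C.bit y (M.cell i) = S.bit x i := by
  obtain ⟨z, hz, ν, rfl, hν⟩ := h
  obtain rfl | hpos := eq_zero_or_pos ν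
  · simpa using M.bit_eq hz i
  · simpa using (hν 0 hpos).2 i

variable {M} in
theorem EventuallyRep.step {x : S.Cfg} {y : C.Cfg} (h : M.EventuallyRep x y) (hx : ¬ S.Halted x) :
    ∃ ν > 0, M.EventuallyRep (S.step x) (C.run y ν) ∧
      (∀ ζ < ν, S.Between C M.cell x (S.step x) (C.run y ζ)) ∧
      ∀ f ∈ M.flags, ∃ ζ < ν, C.bit (C.run y ζ) f = true := by
  obtain ⟨z, hz, μ, rfl, hμ⟩ := h
  obtain ⟨ν, hν, hrep, hbetween, hflags⟩ := M.step hz hx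
  refine ⟨μ + ν, hν.trans_le le_add_self, ⟨_, by rwa [run_add], .refl _⟩,
    forall_run_lt_add (fun ζ hζ => (hμ ζ hζ).imp_right fun h i => .inl (by simpa using h i))
      hbetween, fun f hf => ?_⟩
  obtain ⟨ζ, hζ, hbit⟩ := hflags f hf
  exact ⟨μ + ζ, by gcongr, by rwa [run_add]⟩

variable {M} in
theorem EventuallyRep.exists_haltsAt {x : S.Cfg} {y : C.Cfg} (h : M.EventuallyRep x y)
    (hx : S.Halted x) : ∃ ν, C.HaltsAt y ν := by
  obtain ⟨z, hz, hyz⟩ := h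
  obtain ⟨ν, hν, hlt⟩ := M.halt hz hx
  exact ((hyz.mono fun _ h => h.1).trans ⟨ν, rfl, hlt⟩).exists_haltsAt hν

/-- The length of the run of `C` from `y` that simulates one step of `S` from `x`. -/
noncomputable def stepLength (x : S.Cfg) (y : C.Cfg) : Ordinal :=
  if h : M.EventuallyRep x y ∧ ¬ S.Halted x then (h.1.step h.2).choose else 1

/-- The stage of `C` that corresponds to stage `η` of `S`. -/
noncomputable def time (η : Ordinal.{0}) : Ordinal.{0} :=
  Ordinal.limitRecOn η 0 (fun η t => t + M.stepLength (S.run x₀ η) (C.run y₀ t))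
    fun o _ ih => ⨆ a : Set.Iio o, ih a.1 a.2

@[simp] theorem time_zero : M.time 0 = 0 := by
  simp [time]

theorem time_add_one (η : Ordinal) :
    M.time (η + 1) = M.time η + M.stepLength (S.run x₀ η) (C.run y₀ (M.time η)) := by
  rw [time, Ordinal.limitRecOn_add_one]
  rfl

theorem time_limit {o : Ordinal} (ho : Order.IsSuccLimit o) :
    M.time o = ⨆ a : Set.Iio o, M.time a := by
  rw [time, Ordinal.limitRecOn_limit _ _ _ _ ho]
  rfl

theorem isNormal_time : Order.IsNormal M.time := by
  refine .of_succ_lt (fun η => ?_) fun {o} ho => ?_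
  · rw [Order.succ_eq_add_one, time_add_one, lt_add_iff_pos_right, stepLength]
    split_ifs with h
    · exact (h.1.step h.2).choose_spec.1
    · exact zero_lt_one
  · rw [M.time_limit ho]
    exact isLUB_ciSup_set Ordinal.bddAbove_of_small ⟨0, ho.bot_lt⟩

theorem simulate_step {η : Ordinal} (hrep : M.EventuallyRep (S.run x₀ η) (C.run y₀ (M.time η)))
    (hη : ¬ S.Halted (S.run x₀ η)) :
    M.EventuallyRep (S.run x₀ (η + 1)) (C.run y₀ (M.time (η + 1))) ∧
      (∀ σ ∈ Set.Ico (M.time η) (M.time (η + 1)),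
        S.Between C M.cell (S.run x₀ η) (S.run x₀ (η + 1)) (C.run y₀ σ)) ∧
      ∀ f ∈ M.flags, ∃ σ ∈ Set.Ico (M.time η) (M.time (η + 1)), C.bit (C.run y₀ σ) f = true := by
  obtain ⟨-, hnext, hbetween, hflags⟩ := (hrep.step hη).choose_spec
  have htime : M.time (η + 1) = M.time η + (hrep.step hη).choose := by
    rw [time_add_one, stepLength, dif_pos ⟨hrep, hη⟩]
  rw [run_add_one, htime, run_add]
  refine ⟨hnext, fun σ hσ => ?_, fun f hf => ?_⟩
  · obtain ⟨δ, rfl⟩ := le_iff_exists_add.1 hσ.1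
    rw [run_add]
    exact hbetween δ (by simpa using hσ.2)
  · obtain ⟨ζ, hζ, hbit⟩ := hflags f hf
    exact ⟨M.time η + ζ, ⟨le_self_add, by gcongr⟩, by rwa [run_add]⟩

section limit

variable {o : Ordinal}

theorem between_of_lt_time
    (hrep : ∀ η < o, M.EventuallyRep (S.run x₀ η) (C.run y₀ (M.time η)))
    (hhalt : ∀ η < o, ¬ S.Halted (S.run x₀ η))
    {σ : Ordinal} (hσ : σ < M.time o) :
    ∃ η < o, σ ∈ Set.Ico (M.time η) (M.time (η + 1)) ∧
      S.Between C M.cell (S.run x₀ η) (S.run x₀ (η + 1)) (C.run y₀ σ) := by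
  obtain ⟨η, hη⟩ := M.isNormal_time.exists_map_le_lt_map_succ (x := σ) (by simp)
  have hηo : η < o := M.isNormal_time.strictMono.lt_iff_lt.1 (hη.1.trans_lt hσ)
  exact ⟨η, hηo, hη, (M.simulate_step (hrep η hηo) (hhalt η hηo)).2.1 σ hη⟩

theorem limsupBit_time (ho : Order.IsSuccLimit o)
    (hrep : ∀ η < o, M.EventuallyRep (S.run x₀ η) (C.run y₀ (M.time η)))
    (hhalt : ∀ η < o, ¬ S.Halted (S.run x₀ η))
    (i : S.Cell) :
    limsupBit (M.time o) (fun σ => C.bit (C.run y₀ σ) (M.cell i)) =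
      limsupBit o fun η => S.bit (S.run x₀ η) i := by
  have hmono := M.isNormal_time.strictMono
  rw [Bool.eq_iff_iff, limsupBit_eq_true, limsupBit_eq_true]
  constructor
  · intro h β hβ
    obtain ⟨σ, ⟨hβσ, hσo⟩, hbit⟩ := h (M.time β) (hmono hβ)
    obtain ⟨η, hηo, hση, -, hbetween⟩ := M.between_of_lt_time hrep hhalt hσo
    have hβη : β ≤ η := Order.lt_add_one_iff.1 (hmono.lt_iff_lt.1 (hβσ.trans_lt hση.2))
    obtain heq | heq := hbetween i
    · exact ⟨η, ⟨hβη, hηo⟩, heq ▸ hbit⟩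
    · exact ⟨η + 1, ⟨hβη.trans (lt_add_one η).le, ho.add_one_lt hηo⟩, heq ▸ hbit⟩
  · intro h β hβ
    obtain ⟨η, hηo, hβη⟩ := (M.isNormal_time.lt_iff_exists_lt ho).1 hβ
    obtain ⟨γ, ⟨hηγ, hγo⟩, hbit⟩ := h η hηo
    exact ⟨M.time γ, ⟨hβη.le.trans (hmono.monotone hηγ), hmono hγo⟩,
      by rw [(hrep γ hγo).bit_eq, hbit]⟩

theorem limsupBit_flag (ho : Order.IsSuccLimit o)
    (hrep : ∀ η < o, M.EventuallyRep (S.run x₀ η) (C.run y₀ (M.time η)))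
    (hhalt : ∀ η < o, ¬ S.Halted (S.run x₀ η))
    {f : C.Cell} (hf : f ∈ M.flags) :
    limsupBit (M.time o) (fun σ => C.bit (C.run y₀ σ) f) = true := by
  refine limsupBit_eq_true.2 fun β hβ => ?_
  obtain ⟨η, hηo, hβη⟩ := (M.isNormal_time.lt_iff_exists_lt ho).1 hβ
  obtain ⟨σ, hσ, hbit⟩ := (M.simulate_step (hrep η hηo) (hhalt η hηo)).2.2 f hf
  exact ⟨σ, ⟨hβη.le.trans hσ.1,
    hσ.2.trans_le (M.isNormal_time.monotone (ho.add_one_lt hηo).le)⟩, hbit⟩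

end limit

theorem eventuallyRep_run {η : Ordinal} (h : ∀ ζ < η, ¬ S.Halted (S.run x₀ ζ)) :
    M.EventuallyRep (S.run x₀ η) (C.run y₀ (M.time η)) := by
  induction η using Ordinal.limitRecOn with
  | zero => simpa [EventuallyRep] using M.start
  | add_one η ih =>
    have hrep := ih fun ζ hζ => h ζ (hζ.trans (lt_add_one η))
    exact (M.simulate_step hrep (h η (lt_add_one η))).1
  | limit o ho ih =>
    have hrep η (hη : η < o) := ih η hη fun ζ hζ => h ζ (hζ.trans hη)
    have hlim := M.limit (fun j => limsupBit (M.time o) fun σ => C.bit (C.run y₀ σ) j)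
      fun f hf => M.limsupBit_flag ho hrep h hf
    simp only [Function.comp_def, M.limsupBit_time ho hrep h] at hlim
    rwa [run_limit _ _ ho, run_limit _ _ (M.isNormal_time.map_isSuccLimit ho)]

theorem not_halted_of_lt_time {η σ : Ordinal} (h : ∀ ζ < η, ¬ S.Halted (S.run x₀ ζ))
    (hσ : σ < M.time η) : ¬ C.Halted (C.run y₀ σ) :=
  have hrep ζ (hζ : ζ < η) := M.eventuallyRep_run fun ξ hξ => h ξ (hξ.trans hζ)
  have ⟨_, _, _, hbetween⟩ := M.between_of_lt_time hrep h hσ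
  hbetween.1

theorem exists_haltsAt (M : Simulation S C x₀ y₀) {η : Ordinal} (h : S.HaltsAt x₀ η) :
    ∃ ξ ≥ η, C.HaltsAt y₀ ξ := by
  obtain ⟨hη, hlt⟩ := h
  obtain ⟨ν, hν, hνlt⟩ := (M.eventuallyRep_run hlt).exists_haltsAt hη
  refine ⟨M.time η + ν, M.isNormal_time.strictMono.le_apply.trans le_self_add,
    by rwa [run_add], ?_⟩
  exact forall_run_lt_add (P := (¬ C.Halted ·))
    (fun σ hσ => M.not_halted_of_lt_time hlt hσ) hνlt

end Simulation
end System

namespace Machine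

/-- The transfinite system given by a machine. -/
abbrev system (M : Machine) : System where
  Cfg := Snapshot M.Q
  Cell := Fin 3 × ℕ
  step := M.stepSnap
  bit s i := s.tape i.1 i.2
  lim b := ⟨M.limit, 0, fun i n => b (i, n)⟩
  Halted s := s.state = M.halt

variable (M : Machine) (x : R)

theorem snap_def (o : Ordinal) :
    M.snap x o = if o = 0 then M.init x
      else if hs : ∃ β, β < o ∧ o = β + 1 then M.stepSnap (M.snap x hs.choose)
      else ⟨M.limit, 0, fun i n =>
        decide (∀ β < o, ∃ γ, β ≤ γ ∧ ∃ _ : γ < o, (M.snap x γ).tape i n = true)⟩ :=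
  WellFounded.fix_eq _ _ _

theorem snap_add_one (o : Ordinal) : M.snap x (o + 1) = M.stepSnap (M.snap x o) := by
  have hs : ∃ β, β < o + 1 ∧ o + 1 = β + 1 := ⟨o, lt_add_one o, rfl⟩
  have ho : o = hs.choose := by simpa using hs.choose_spec.2
  rw [snap_def, if_neg (by simp), dif_pos hs, ← ho]

theorem snap_limit {o : Ordinal} (ho : Order.IsSuccLimit o) :
    M.snap x o = ⟨M.limit, 0, fun i n => limsupBit o fun γ => (M.snap x γ).tape i n⟩ := by
  have hsucc : ¬ ∃ β, β < o ∧ o = β + 1 := fun ⟨β, hβ, heq⟩ => (ho.add_one_lt hβ).ne heq.symm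
  rw [snap_def, if_neg (Ordinal.isSuccLimit_iff.1 ho).1, dif_neg hsucc]
  simp only [exists_prop, limsupBit, Set.mem_Ico, and_assoc]

theorem snap_eq_run (o : Ordinal) : M.snap x o = M.system.run (M.init x) o := by
  induction o using Ordinal.limitRecOn with
  | zero => rw [System.run_zero, snap_def, if_pos rfl]
  | add_one o ih => rw [System.run_add_one, snap_add_one, ih]
  | limit o ho ih =>
    rw [System.run_limit _ _ ho, snap_limit _ _ ho]
    congr 1
    funext i n
    exact limsupBit_congr ho.bot_lt fun γ hγ => by rw [ih γ hγ.2]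

theorem haltsAt_iff (o : Ordinal) : M.haltsAt x o ↔ M.system.HaltsAt (M.init x) o := by
  simp only [haltsAt, haltedAt, snap_eq_run]
  rfl

end Machine

/-! ### Machines with several tracks -/

/-- A machine with one tape whose cells hold a column of bits, one for each element of the finite
type `Track`. Its limit state is `start`. -/
structure TrackMachine where
  State : Type
  Track : Type
  [finiteState : Finite State]
  [finiteTrack : Finite Track]
  [nonemptyTrack : Nonempty Track]
  start : State
  halt : State
  trans : State → (Track → Bool) → State × (Track → Bool) × Bool

namespace TrackMachine

attribute [instance] finiteState finiteTrack nonemptyTrack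

/-- The head position after a move, to the right if `d` holds and to the left otherwise. -/
def move (d : Bool) (n : ℕ) : ℕ := if d then n + 1 else n - 1

theorem iterate_move_true (k n : ℕ) : (move true)^[k] n = n + k := by
  induction k generalizing n with
  | zero => rfl
  | succ k ih => rw [Function.iterate_succ_apply, ih, move, if_pos rfl, Nat.add_right_comm]; rfl

theorem iterate_move_false (k n : ℕ) : (move false)^[k] n = n - k := by
  induction k generalizing n with
  | zero => rfl
  | succ k ih => rw [Function.iterate_succ_apply, ih, move, if_neg Bool.false_ne_true]; omega

theorem iterate_move_mul (d : Bool) (n k : ℕ) : (move d)^[k] (n * k) = move d n * k := by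
  cases d
  · simp [iterate_move_false, move, Nat.sub_mul]
  · simp [iterate_move_true, move, Nat.add_mul]

variable (T : TrackMachine)

/-- A configuration of a track machine. -/
structure Cfg where
  state : T.State
  head : ℕ
  cell : ℕ → T.Track → Bool

/-- One step of a track machine. -/
def next (c : T.Cfg) : T.Cfg :=
  let t := T.trans c.state (c.cell c.head)
  ⟨t.1, move t.2.2 c.head, Function.update c.cell c.head t.2.1⟩

/-- The transfinite system given by a track machine. -/
abbrev system : System where
  Cfg := T.Cfg
  Cell := T.Track × ℕ
  step := T.next
  bit c i := c.cell i.2 i.1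
  lim b := ⟨T.start, 0, fun n j => b (j, n)⟩
  Halted c := c.state = T.halt

/-- The configuration of a track machine on a blank tape. -/
def blank : T.Cfg := ⟨T.start, 0, fun _ _ => false⟩

/-- The number of tracks. -/
noncomputable def width : ℕ := Nat.card T.Track

theorem width_pos : 0 < T.width := Nat.card_pos

/-- A numbering of the tracks. -/
noncomputable def ix : T.Track ≃ Fin T.width := Finite.equivFin T.Track

/-- The cell of the simulating machine that holds track `j` of column `n`. -/
noncomputable def address (n : ℕ) (j : T.Track) : ℕ := n * T.width + T.ix j

theorem address_inj {m n : ℕ} {i j : T.Track} :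
    T.address m i = T.address n j ↔ m = n ∧ i = j := by
  have hmod n j : T.address n j % T.width = T.ix j := by
    rw [address, Nat.mul_add_mod', Nat.mod_eq_of_lt (T.ix j).2]
  have hdiv n j : T.address n j / T.width = n := by
    rw [address, mul_comm, Nat.mul_add_div T.width_pos, Nat.div_eq_of_lt (T.ix j).2, add_zero]
  refine ⟨fun h => ⟨?_, T.ix.injective (Fin.ext ?_)⟩, by rintro ⟨rfl, rfl⟩; rfl⟩
  · rw [← hdiv m i, h, hdiv]
  · rw [← hmod m i, h, hmod]

/-- States of the machine that simulates a track machine in state `q`: it reads the current column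
from left to right, having collected the bits before track `l` in `w`, or writes the column `w` from
right to left, being about to write track `l`, or has `k` moves in direction `d` left to reach the
next column. -/
inductive SimState
  | read (q : T.State) (w : T.Track → Bool) (l : Fin T.width)
  | write (q : T.State) (w : T.Track → Bool) (d : Bool) (l : Fin T.width)
  | go (q : T.State) (d : Bool) (k : Fin T.width)

instance : Finite T.SimState :=
  .of_injective (β := T.State × (T.Track → Bool) × Fin T.width ⊕
      T.State × (T.Track → Bool) × Bool × Fin T.width ⊕ T.State × Bool × Fin T.width) (fun
    | .read q w l => .inl (q, w, l)
    | .write q w d l => .inr (.inl (q, w, d, l))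
    | .go q d k => .inr (.inr (q, d, k))) <| by
    rintro ⟨_, _, _⟩ ⟨_, _, _⟩ h <;> simp_all

/-- The state in which the simulating machine begins to simulate a step from state `q`. -/
noncomputable def ready (q : T.State) : T.SimState := .read q (fun _ => false) ⟨0, T.width_pos⟩

/-- The state in which the simulating machine has `k` moves in direction `d` left. -/
noncomputable def goOn (q : T.State) (d : Bool) (k : ℕ) : T.SimState :=
  if h : 0 < k ∧ k < T.width then .go q d ⟨k, h.2⟩ else T.ready q

/-- The next state of the simulating machine, the bit written and the direction of the move when
track `l` of the column `w` is due to be written. -/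
noncomputable def writeTrans (q : T.State) (w : T.Track → Bool) (d : Bool) (l : Fin T.width) :
    T.SimState × Bool × Bool :=
  if (l : ℕ) = 0 then (T.goOn q d (T.width - 1), w (T.ix.symm l), d)
  else (.write q w d ⟨l - 1, (Nat.sub_le _ _).trans_lt l.2⟩, w (T.ix.symm l), false)

/-- The transition function of the simulating machine on its first tape. -/
noncomputable def simTrans : T.SimState → Bool → T.SimState × Bool × Bool
  | .read q w l, b =>
    let w' := Function.update w (T.ix.symm l) b
    let t := T.trans q w'
    if h : l + 1 < T.width then (.read q w' ⟨l + 1, h⟩, b, true)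
    else T.writeTrans t.1 t.2.1 t.2.2 l
  | .write q w d l, _ => T.writeTrans q w d l
  | .go q d k, b => (T.goOn q d (k - 1), b, d)

/-- A numbering of the states of the simulating machine. -/
noncomputable def num : T.SimState ≃ Fin (Nat.card T.SimState - 1 + 1) :=
  haveI : Nonempty T.SimState := ⟨T.ready T.start⟩
  (Finite.equivFin T.SimState).trans (finCongr (Nat.sub_add_cancel Nat.card_pos).symm)

/-- The infinite time Turing machine simulating a track machine on its first tape, where the columns
are laid out one after the other. -/
noncomputable def toMachine : Machine where
  Q := Nat.card T.SimState - 1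
  start := T.num (T.ready T.start)
  limit := T.num (T.ready T.start)
  halt := T.num (T.ready T.halt)
  trans p :=
    let t := T.simTrans (T.num.symm p.1) (p.2 0)
    (T.num t.1, Function.update p.2 0 t.2.1, t.2.2)

/-- A configuration of the simulating machine. -/
noncomputable def conf (s : T.SimState) (h : ℕ) (t : Fin 3 → ℕ → Bool) : T.toMachine.system.Cfg :=
  ⟨T.num s, h, t⟩

/-- The tapes `t` with bit `b` written into cell `h` of the first tape. -/
def put (t : Fin 3 → ℕ → Bool) (h : ℕ) (b : Bool) : Fin 3 → ℕ → Bool :=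
  Function.update t 0 (Function.update (t 0) h b)

@[simp] theorem put_self (t : Fin 3 → ℕ → Bool) (h : ℕ) : put t h (t 0 h) = t := by
  simp [put]

theorem step_conf (s : T.SimState) (h : ℕ) (t : Fin 3 → ℕ → Bool) :
    T.toMachine.system.step (T.conf s h t) =
      let r := T.simTrans s (t 0 h)
      T.conf r.1 (move r.2.2 h) (put t h r.2.1) := by
  simp only [Machine.stepSnap, conf, toMachine, move, Equiv.symm_apply_apply,
    Snapshot.mk.injEq, true_and]
  funext i n
  by_cases hi : i = 0
  · subst hi
    by_cases hn : n = h <;> simp [put, hn]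
  · by_cases hn : n = h <;> simp [put, hi, hn]

/-- The tape `t` holds the columns `c`. -/
def Stores (t : ℕ → Bool) (c : ℕ → T.Track → Bool) : Prop := ∀ n j, t (T.address n j) = c n j

section step

/-- The columns of `x` while it makes a step, the tracks from `l` on having been written. -/
noncomputable def halfWritten (x : T.Cfg) (l : ℕ) (n : ℕ) (j : T.Track) : Bool :=
  if n = x.head ∧ l ≤ T.ix j then (T.next x).cell n j else x.cell n j

/-- What holds of the simulating machine throughout its simulation of the step from `x`. -/
abbrev StepInvariant (x : T.Cfg) : T.toMachine.system.Cfg → Prop :=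
  T.system.Between T.toMachine.system (fun i => (0, T.address i.2 i.1)) x (T.next x)

variable {T} {x : T.Cfg}

theorem halfWritten_zero : T.halfWritten x 0 = (T.next x).cell := by
  funext n j
  by_cases hn : n = x.head <;> simp [halfWritten, next, hn]

theorem halfWritten_width : T.halfWritten x T.width = x.cell := by
  funext n j
  simp [halfWritten, (T.ix j).2]

theorem Stores.put_halfWritten {t : Fin 3 → ℕ → Bool} {l : Fin T.width}
    (ht : T.Stores (t 0) (T.halfWritten x (l + 1))) :
    T.Stores (put t (x.head * T.width + l) ((T.next x).cell x.head (T.ix.symm l)) 0)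
      (T.halfWritten x l) := by
  intro n j
  obtain ⟨k, rfl⟩ := T.ix.surjective l
  have hjk : (T.ix j : ℕ) = T.ix k ↔ j = k := by simp [Fin.val_inj]
  rw [show x.head * T.width + T.ix k = T.address x.head k from rfl]
  simp only [put, Function.update_self, Function.update_apply, T.address_inj, ht n j,
    halfWritten, Equiv.symm_apply_apply]
  grind

theorem stepInvariant_conf {s : T.SimState} {h l : ℕ} {t : Fin 3 → ℕ → Bool}
    (hs : s ≠ T.ready T.halt) (ht : T.Stores (t 0) (T.halfWritten x l)) :
    T.StepInvariant x (T.conf s h t) := by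
  refine ⟨by simpa [conf, toMachine] using hs, fun i => ?_⟩
  change t 0 (T.address i.2 i.1) = _ ∨ t 0 (T.address i.2 i.1) = _
  rw [ht, halfWritten]
  split_ifs
  · exact .inr rfl
  · exact .inl rfl

theorem reaches_go {q : T.State} {d : Bool} {t : Fin 3 → ℕ → Bool}
    (ht : T.Stores (t 0) (T.next x).cell) {k : ℕ} (hk : k < T.width) (h : ℕ) :
    T.toMachine.system.Reaches (T.StepInvariant x) (T.conf (T.goOn q d k) h t)
      (T.conf (T.ready q) ((move d)^[k] h) t) := by
  induction k generalizing h with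
  | zero => simpa [goOn] using .refl _
  | succ k ih =>
    rw [goOn, dif_pos ⟨k.succ_pos, hk⟩]
    refine .head (stepInvariant_conf (by simp [ready]) (halfWritten_zero ▸ ht)) ?_
    rw [step_conf]
    simpa [simTrans] using ih (by omega) (move d h)

theorem exists_reaches_write (l : ℕ) (hl : l < T.width) {s : T.SimState} {t : Fin 3 → ℕ → Bool}
    (hs : T.simTrans s (t 0 (x.head * T.width + l)) = T.writeTrans (T.next x).state
      ((T.next x).cell x.head) (T.trans x.state (x.cell x.head)).2.2 ⟨l, hl⟩)
    (ht : T.Stores (t 0) (T.halfWritten x (l + 1))) :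
    ∃ t', T.Stores (t' 0) (T.next x).cell ∧ T.toMachine.system.Reaches (T.StepInvariant x)
      (T.toMachine.system.step (T.conf s (x.head * T.width + l) t))
      (T.conf (T.ready (T.next x).state) ((T.next x).head * T.width) t') := by
  have hput := Stores.put_halfWritten (l := ⟨l, hl⟩) ht
  induction l generalizing s t with
  | zero =>
    rw [halfWritten_zero] at hput
    refine ⟨_, hput, ?_⟩
    have hgo := reaches_go (q := (T.next x).state) (d := (T.trans x.state (x.cell x.head)).2.2)
      hput (Nat.sub_lt T.width_pos one_pos)
      (move (T.trans x.state (x.cell x.head)).2.2 (x.head * T.width))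
    rw [← Function.iterate_succ_apply, Nat.succ_eq_add_one,
      Nat.sub_one_add_one T.width_pos.ne', iterate_move_mul] at hgo
    rw [step_conf, hs]
    exact hgo
  | succ l ih =>
    have hl' : l < T.width := Nat.lt_of_succ_lt hl
    obtain ⟨t', ht', hreach⟩ := ih hl' (s := .write _ _ _ ⟨l, hl'⟩) rfl hput
      (Stores.put_halfWritten (l := ⟨l, hl'⟩) hput)
    have hstep : T.toMachine.system.step (T.conf s (x.head * T.width + (l + 1)) t) =
        T.conf (.write (T.next x).state ((T.next x).cell x.head)
          (T.trans x.state (x.cell x.head)).2.2 ⟨l, hl'⟩) (x.head * T.width + l)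
          (put t (x.head * T.width + (l + 1))
            ((T.next x).cell x.head (T.ix.symm ⟨l + 1, hl⟩))) := by
      rw [step_conf, hs]
      simp [writeTrans, move, ← add_assoc]
    refine ⟨t', ht', ?_⟩
    rw [hstep]
    exact .head (stepInvariant_conf (by simp [ready]) hput) hreach

theorem update_eq_cell {t : Fin 3 → ℕ → Bool} (ht : T.Stores (t 0) x.cell) {l : ℕ}
    (hl : l < T.width) {w : T.Track → Bool} (hw : ∀ j, T.ix j < l → w j = x.cell x.head j)
    (j : T.Track) (hj : T.ix j < l + 1) :
    Function.update w (T.ix.symm ⟨l, hl⟩) (t 0 (x.head * T.width + l)) j = x.cell x.head j := by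
  have hbit : t 0 (x.head * T.width + l) = x.cell x.head (T.ix.symm ⟨l, hl⟩) := by
    simpa [address] using ht x.head (T.ix.symm ⟨l, hl⟩)
  rw [Function.update_apply, hbit, Equiv.eq_symm_apply]
  split_ifs with h
  · rw [← h, Equiv.symm_apply_apply]
  · exact hw j ((Nat.lt_succ_iff.1 hj).lt_of_ne (by simpa [Fin.ext_iff] using h))

theorem exists_reaches_read (hx : x.state ≠ T.halt) {t : Fin 3 → ℕ → Bool}
    (ht : T.Stores (t 0) x.cell) {l : ℕ} (hl : l < T.width) {w : T.Track → Bool}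
    (hw : ∀ j, T.ix j < l → w j = x.cell x.head j) :
    ∃ t', T.Stores (t' 0) (T.next x).cell ∧ T.toMachine.system.Reaches (T.StepInvariant x)
      (T.toMachine.system.step (T.conf (.read x.state w ⟨l, hl⟩) (x.head * T.width + l) t))
      (T.conf (T.ready (T.next x).state) ((T.next x).head * T.width) t') := by
  obtain ⟨k, hk⟩ : ∃ k, l + k + 1 = T.width := ⟨T.width - 1 - l, by omega⟩
  induction k generalizing l w with
  | zero =>
    have hcol : Function.update w (T.ix.symm ⟨l, hl⟩) (t 0 (x.head * T.width + l)) =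
        x.cell x.head :=
      funext fun j => update_eq_cell ht hl hw j (by omega)
    refine exists_reaches_write l hl ?_ ?_
    · simp [simTrans, hcol, next, show ¬ l + 1 < T.width by omega]
    · rwa [show l + 1 = T.width by omega, halfWritten_width]
  | succ k ih =>
    have hl' : l + 1 < T.width := by omega
    obtain ⟨t', ht', hreach⟩ := ih hl' (update_eq_cell ht hl hw) (by omega)
    refine ⟨t', ht', ?_⟩
    have hstep : T.toMachine.system.step
        (T.conf (.read x.state w ⟨l, hl⟩) (x.head * T.width + l) t) =
        T.conf (.read x.state (Function.update w (T.ix.symm ⟨l, hl⟩) (t 0 (x.head * T.width + l)))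
          ⟨l + 1, hl'⟩) (x.head * T.width + (l + 1)) t := by
      rw [step_conf]
      simp [simTrans, hl', move, add_assoc]
    rw [hstep]
    exact .head (stepInvariant_conf (by simp [ready, hx]) (halfWritten_width ▸ ht)) hreach

end step

/-- The simulation of a track machine by an infinite time Turing machine. -/
noncomputable def simulation :
    T.system.Simulation T.toMachine.system T.blank (T.toMachine.init zeroR) where
  Rep x y := ∃ t, y = T.conf (T.ready x.state) (x.head * T.width) t ∧ T.Stores (t 0) x.cell
  cell i := (0, T.address i.2 i.1)
  flags := ∅
  bit_eq := by
    rintro x _ ⟨t, rfl, ht⟩ ⟨j, n⟩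
    exact ht n j
  start := by
    refine ⟨_, ⟨fun i n => if i = 0 then zeroR n else false, ?_, ?_⟩, .refl _⟩
    · simp only [Machine.init, conf, blank, zero_mul]
      rfl
    · intro n j
      simp [zeroR, blank]
  step := by
    rintro x _ ⟨t, rfl, ht⟩ hx
    have hinv : T.StepInvariant x (T.conf (T.ready x.state) (x.head * T.width) t) :=
      stepInvariant_conf (l := T.width) (by simpa [ready] using hx) (halfWritten_width ▸ ht)
    obtain ⟨t', ht', hreach⟩ :=
      exists_reaches_read hx ht T.width_pos (w := fun _ => false) (by simp)
    obtain ⟨ν, hν, hrun, hlt⟩ := System.Reaches.exists_pos hinv hreach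
    exact ⟨ν, hν, ⟨t', hrun, ht'⟩, hlt, by simp⟩
  limit b _ := by
    refine ⟨_, ⟨fun i n => b (i, n), ?_, fun _ _ => rfl⟩, .refl _⟩
    simp only [conf, zero_mul]
    rfl
  halt := by
    rintro x _ ⟨t, rfl, -⟩ hx
    refine ⟨0, ?_, by simp⟩
    simpa [conf, toMachine, ready] using hx

end TrackMachine

/-! ### Stack machines -/

/-- Instructions of a stack machine: push a symbol, pop or inspect the top symbol of a stack, and
load or store the memory bit whose address is the height of a distinguished stack. -/
inductive StackInstr (State Stack Symbol : Type)
  | push (k : Stack) (s : Symbol) (q : State)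
  | pop (k : Stack) (f : Option Symbol → State)
  | peek (k : Stack) (f : Option Symbol → State)
  | load (f : Bool → State)
  | store (b : Bool) (q : State)

/-- A machine with finitely many stacks and a memory of bits, which is addressed by the height of
the stack `pointer`. At limit stages the stacks are emptied and the control returns to `start`. -/
structure StackMachine where
  State : Type
  Stack : Type
  Symbol : Type
  [finiteState : Finite State]
  [finiteStack : Finite Stack]
  [finiteSymbol : Finite Symbol]
  start : State
  halt : State
  pointer : Stack
  instr : State → StackInstr State Stack Symbol

namespace StackMachine

attribute [instance] finiteState finiteStack finiteSymbol

variable (S : StackMachine)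

/-- A configuration of a stack machine. -/
structure Cfg where
  state : S.State
  stk : S.Stack → List S.Symbol
  mem : ℕ → Bool

/-- One step of a stack machine. -/
noncomputable def next (c : S.Cfg) : S.Cfg :=
  match S.instr c.state with
  | .push k s q => ⟨q, Function.update c.stk k (s :: c.stk k), c.mem⟩
  | .pop k f => ⟨f (c.stk k).head?, Function.update c.stk k (c.stk k).tail, c.mem⟩
  | .peek k f => ⟨f (c.stk k).head?, c.stk, c.mem⟩
  | .load f => ⟨f (c.mem (c.stk S.pointer).length), c.stk, c.mem⟩
  | .store b q => ⟨q, c.stk, Function.update c.mem (c.stk S.pointer).length b⟩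

/-- The transfinite system given by a stack machine. -/
noncomputable abbrev system : System where
  Cfg := S.Cfg
  Cell := ℕ
  step := S.next
  bit c n := c.mem n
  lim b := ⟨S.start, fun _ => [], b⟩
  Halted c := c.state = S.halt

/-- The configuration of a stack machine with empty stacks and empty memory. -/
def blank : S.Cfg := ⟨S.start, fun _ => [], fun _ => false⟩

/-- The tracks of the simulating track machine: a mark on the first column once it has been cleaned,
a mark on the first column while it is being cleaned, the memory, and for every stack and every
symbol the occurrences of the symbol in the stack. -/
inductive Track (Stack Symbol : Type)
  | origin
  | dirty
  | mem
  | sym (k : Stack) (s : Symbol)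

instance {Stack Symbol : Type} [Finite Stack] [Finite Symbol] : Finite (Track Stack Symbol) :=
  .of_injective (β := Option (Option (Option (Stack × Symbol)))) (fun
    | .origin => none
    | .dirty => some none
    | .mem => some (some none)
    | .sym k s => some (some (some (k, s)))) <| by
    rintro (_ | _ | _ | ⟨_, _⟩) (_ | _ | _ | ⟨_, _⟩) h <;> simp_all

/-- What the simulating track machine is doing: erasing the stacks (`clean` on the first column,
`sweep` afterwards), starting to simulate a step, looking for the top of a stack, working on the
top symbol of a stack, or returning to the first column. -/
inductive Mode
  | clean
  | sweep
  | home
  | seek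
  | top
  | ret

noncomputable instance : Fintype Mode :=
  ⟨{.clean, .sweep, .home, .seek, .top, .ret}, by rintro ⟨⟩ <;> simp⟩

/-- A column of the tape of the simulating track machine. -/
abbrev Column : Type := Track S.Stack S.Symbol → Bool

/-- The symbol of stack `k` in a column. -/
noncomputable def symbol (w : S.Column) (k : S.Stack) : Option S.Symbol :=
  if h : ∃ s, w (.sym k s) = true then some h.choose else none

/-- The column `w` with the symbol of stack `k` replaced. -/
noncomputable def setSymbol (w : S.Column) (k : S.Stack) (o : Option S.Symbol) : S.Column
  | .sym k' s => if k' = k then decide (o = some s) else w (.sym k' s)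
  | j => w j

/-- The column `w` with everything but the memory erased and the mark `dirty` set to `d`. -/
def erased (w : S.Column) (d : Bool) : S.Column
  | .mem => w .mem
  | .dirty => d
  | _ => false

/-- The stack at whose height an instruction is executed. -/
def target : StackInstr S.State S.Stack S.Symbol → S.Stack
  | .push k _ _ | .pop k _ | .peek k _ => k
  | .load _ | .store _ _ => S.pointer

/-- The transition on the first free column of the target stack of the instruction. -/
noncomputable def execFree (q : S.State) (w : S.Column) :
    StackInstr S.State S.Stack S.Symbol → (Mode × S.State) × S.Column × Bool
  | .push k s q' => ((.ret, q'), S.setSymbol w k (some s), false)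
  | .pop _ _ | .peek _ _ => ((.top, q), w, false)
  | .load f => ((.ret, f (w .mem)), w, false)
  | .store b q' => ((.ret, q'), Function.update w .mem b, false)

/-- The transition on the column of the top symbol of the target stack of the instruction. -/
noncomputable def execTop (q : S.State) (w : S.Column) :
    StackInstr S.State S.Stack S.Symbol → (Mode × S.State) × S.Column × Bool
  | .pop k f => ((.ret, f (S.symbol w k)), S.setSymbol w k none, false)
  | .peek k f => ((.ret, f (S.symbol w k)), w, false)
  | _ => ((.top, q), w, false)

/-- The transition function of the track machine simulating a stack machine. -/
noncomputable def simTrans : Mode × S.State → S.Column → (Mode × S.State) × S.Column × Bool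
  | (.clean, q), w =>
    if w .dirty = true ∧ w .origin = false then
      ((.home, q), Function.update (Function.update w .dirty false) .origin true, false)
    else ((.sweep, q), S.erased w true, true)
  | (.sweep, q), w => ((.sweep, q), S.erased w false, true)
  | (.home, q), w => ((.seek, q), w, false)
  | (.seek, q), w =>
    if S.symbol w (S.target (S.instr q)) ≠ none then ((.seek, q), w, true)
    else S.execFree q w (S.instr q)
  | (.top, q), w => S.execTop q w (S.instr q)
  | (.ret, q), w => (if w .origin then (.home, q) else (.ret, q), w, false)

/-- The track machine simulating a stack machine. -/
noncomputable def toTrackMachine : TrackMachine where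
  State := Mode × S.State
  Track := Track S.Stack S.Symbol
  nonemptyTrack := ⟨.mem⟩
  start := (.clean, S.start)
  halt := (.home, S.halt)
  trans := S.simTrans

/-- A configuration of the simulating track machine. -/
def conf (m : Mode) (q : S.State) (h : ℕ) (t : ℕ → S.Column) : S.toTrackMachine.system.Cfg :=
  ⟨(m, q), h, t⟩

theorem step_conf (m : Mode) (q : S.State) (h : ℕ) (t : ℕ → S.Column) :
    S.toTrackMachine.system.step (S.conf m q h t) =
      let r := S.simTrans (m, q) (t h)
      S.conf r.1.1 r.1.2 (TrackMachine.move r.2.2 h) (Function.update t h r.2.1) := rfl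

theorem not_halted_conf {m : Mode} {q : S.State} {h : ℕ} {t : ℕ → S.Column}
    (hm : m = .home → q ≠ S.halt) : ¬ S.toTrackMachine.system.Halted (S.conf m q h t) :=
  fun hhalt => hm (congrArg Prod.fst hhalt) (congrArg Prod.snd hhalt)

/-- The tape contents representing a configuration of the stack machine, the bottom of each stack
being in the first column. -/
noncomputable def tape (c : S.Cfg) (n : ℕ) : S.Column
  | .origin => decide (n = 0)
  | .dirty => false
  | .mem => c.mem n
  | .sym k s => decide ((c.stk k).reverse[n]? = some s)

@[simp] theorem symbol_tape (c : S.Cfg) (n : ℕ) (k : S.Stack) :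
    S.symbol (S.tape c n) k = (c.stk k).reverse[n]? := by
  rw [symbol]
  cases ho : (c.stk k).reverse[n]? with
  | none => simp [tape, ho]
  | some s => simp [tape, ho]

section clean

/-- The tape after the cleaning sweep has treated the first `n` columns. -/
noncomputable def swept (t : ℕ → S.Column) (n m : ℕ) : S.Column :=
  if m < n then S.erased (t m) (decide (m = 0)) else t m

variable {S} {t : ℕ → S.Column}

theorem swept_of_le {m n : ℕ} (h : n ≤ m) : S.swept t n m = t m := if_neg h.not_gt

theorem swept_add_one (n : ℕ) :
    Function.update (S.swept t n) n (S.erased (t n) (decide (n = 0))) = S.swept t (n + 1) := by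
  funext m
  obtain h | rfl | h := lt_trichotomy m n
  · rw [Function.update_of_ne h.ne, swept, swept, if_pos h, if_pos (h.trans n.lt_succ_self)]
  · simp [swept]
  · rw [Function.update_of_ne h.ne', swept_of_le h.le, swept_of_le h]

theorem swept_mem (n m : ℕ) : S.swept t n m .mem = t m .mem := by
  rw [swept]
  split_ifs <;> rfl

theorem step_sweep {q : S.State} (ht : ¬ (t 0 .dirty = true ∧ t 0 .origin = false)) (n : ℕ) :
    S.toTrackMachine.system.step
        (S.conf (if n = 0 then .clean else .sweep) q n (S.swept t n)) =
      S.conf .sweep q (n + 1) (S.swept t (n + 1)) := by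
  rw [step_conf, ← swept_add_one, swept_of_le le_rfl]
  split_ifs with hn
  · subst hn
    simp [simTrans, if_neg ht, TrackMachine.move]
  · simp [simTrans, TrackMachine.move, hn]

theorem step_swept (c : S.Cfg) (hc : c.stk = fun _ => []) (ht : ∀ n, t n .mem = c.mem n) :
    S.toTrackMachine.system.step
        (S.conf .clean c.state 0 fun n => S.erased (t n) (decide (n = 0))) =
      S.conf .home c.state 0 (S.tape c) := by
  rw [step_conf]
  simp only [simTrans, erased, decide_true, and_self, if_true, TrackMachine.move]
  congr 1
  funext n j
  by_cases hn : n = 0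
  · subst hn
    rw [Function.update_self]
    cases j <;> simp [tape, Function.update, erased, hc, ht]
  · rw [Function.update_of_ne hn]
    cases j <;> simp [tape, erased, hn, hc, ht]

/-- A sweep of length `ω` erases the leftovers of the stacks. The limit stage that ends it is
recognized by the mark `dirty` without the mark `origin`. -/
theorem reaches_clean (ht : ¬ (t 0 .dirty = true ∧ t 0 .origin = false)) {x : S.Cfg}
    (hx : x = ⟨S.start, fun _ => [], fun n => t n .mem⟩) :
    S.toTrackMachine.system.Reaches
      (S.system.Between S.toTrackMachine.system (fun n => (.mem, n)) x x)
      (S.conf .clean S.start 0 t) (S.conf .home S.start 0 (S.tape x)) := by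
  subst hx
  let sweeping (n : ℕ) := S.conf (if n = 0 then .clean else .sweep) S.start n (S.swept t n)
  have hmode (n : ℕ) : (if n = 0 then Mode.clean else .sweep) ≠ .home := by
    split_ifs <;> simp
  obtain ⟨ν, hν, hlt, -⟩ := System.exists_run_eq_lim (S := S.toTrackMachine.system)
    (y := sweeping) (Q := fun n z => z = sweeping n)
    (b := fun i => S.erased (t i.2) (decide (i.2 = 0)) i.1)
    (fun n => ⟨1, one_pos, by simpa [sweeping] using step_sweep ht n, by simp⟩)
    (fun i => ⟨i.2 + 1, fun n hn z hz => by
      subst hz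
      simp [sweeping, conf, swept, Nat.lt_of_succ_le hn]⟩)
  have hstart : sweeping 0 = S.conf .clean S.start 0 t := by
    simp only [sweeping, if_true, funext fun m => swept_of_le (t := t) (Nat.zero_le m)]
  rw [← hstart, ← step_swept (t := t) ⟨S.start, fun _ => [], fun n => t n .mem⟩ rfl fun _ => rfl]
  refine .trans ⟨ν, hν, fun ζ hζ => ?_⟩ (.single ?_)
  · obtain ⟨n, hn⟩ := hlt ζ hζ
    rw [hn]
    exact ⟨S.not_halted_conf fun h => absurd h (hmode n), fun m => .inl (swept_mem n m)⟩
  · exact ⟨S.not_halted_conf (by simp), fun m => .inl rfl⟩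

end clean

section step

variable {S} {c : S.Cfg} {P : S.toTrackMachine.system.Cfg → Prop}

theorem update_setSymbol_tape {k : S.Stack} {n : ℕ} {o : Option S.Symbol} {l : List S.Symbol}
    {q : S.State} (h : ∀ m, l.reverse[m]? = if m = n then o else (c.stk k).reverse[m]?) :
    Function.update (S.tape c) n (S.setSymbol (S.tape c n) k o) =
      S.tape ⟨q, Function.update c.stk k l, c.mem⟩ := by
  funext m j
  obtain rfl | hm := eq_or_ne m n
  · rw [Function.update_self]
    cases j with
    | sym k' s => obtain rfl | hk := eq_or_ne k' k <;> simp_all [setSymbol, tape]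
    | _ => rfl
  · rw [Function.update_of_ne hm]
    cases j with
    | sym k' s => obtain rfl | hk := eq_or_ne k' k <;> simp_all [tape]
    | _ => rfl

theorem tape_push (c : S.Cfg) (k : S.Stack) (s : S.Symbol) (q : S.State) :
    Function.update (S.tape c) (c.stk k).length
        (S.setSymbol (S.tape c (c.stk k).length) k (some s)) =
      S.tape ⟨q, Function.update c.stk k (s :: c.stk k), c.mem⟩ := by
  refine update_setSymbol_tape fun m => ?_
  rw [List.reverse_cons, List.getElem?_append, List.getElem?_singleton]
  grind

theorem tape_pop (c : S.Cfg) (k : S.Stack) (q : S.State) :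
    Function.update (S.tape c) ((c.stk k).length - 1)
        (S.setSymbol (S.tape c ((c.stk k).length - 1)) k none) =
      S.tape ⟨q, Function.update c.stk k (c.stk k).tail, c.mem⟩ := by
  refine update_setSymbol_tape fun m => ?_
  cases c.stk k with
  | nil => simp
  | cons s l =>
    rw [List.tail_cons, List.reverse_cons, List.getElem?_append, List.getElem?_singleton]
    grind

theorem tape_store (c : S.Cfg) (n : ℕ) (b : Bool) (q : S.State) :
    Function.update (S.tape c) n (Function.update (S.tape c n) .mem b) =
      S.tape ⟨q, c.stk, Function.update c.mem n b⟩ := by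
  funext m j
  obtain rfl | hm := eq_or_ne m n <;> cases j <;> simp_all [tape]

theorem reaches_seek {q : S.State} (hP : ∀ h, P (S.conf .seek q h (S.tape c))) (n : ℕ)
    (hn : n ≤ (c.stk (S.target (S.instr q))).length) :
    S.toTrackMachine.system.Reaches P (S.conf .seek q 0 (S.tape c))
      (S.conf .seek q n (S.tape c)) := by
  induction n with
  | zero => exact .refl _
  | succ n ih =>
    have hsymbol : S.symbol (S.tape c n) (S.target (S.instr q)) ≠ none := by
      simp only [symbol_tape, ne_eq, List.getElem?_eq_none_iff, List.length_reverse]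
      omega
    have hstep : S.toTrackMachine.system.step (S.conf .seek q n (S.tape c)) =
        S.conf .seek q (n + 1) (S.tape c) := by
      rw [step_conf]
      simp only [simTrans, if_pos hsymbol, Function.update_eq_self, TrackMachine.move, if_true]
    exact hstep ▸ (ih (Nat.le_of_succ_le hn)).tail (hP n)

theorem reaches_ret {q : S.State} (hP : ∀ h, P (S.conf .ret q h (S.tape c))) (n : ℕ) :
    S.toTrackMachine.system.Reaches P (S.conf .ret q n (S.tape c))
      (S.conf .home q 0 (S.tape c)) := by
  induction n with
  | zero =>
    refine .head_eq (hP 0) ?_ (.refl _)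
    rw [step_conf]
    simp [simTrans, tape, TrackMachine.move]
  | succ n ih =>
    refine .head_eq (hP _) ?_ ih
    rw [step_conf]
    simp [simTrans, tape, TrackMachine.move]

theorem step_seek (q : S.State) : S.toTrackMachine.system.step
      (S.conf .seek q (c.stk (S.target (S.instr q))).length (S.tape c)) =
    let n := (c.stk (S.target (S.instr q))).length
    let r := S.execFree q (S.tape c n) (S.instr q)
    S.conf r.1.1 r.1.2 (TrackMachine.move r.2.2 n) (Function.update (S.tape c) n r.2.1) := by
  rw [step_conf]
  simp [simTrans]

theorem symbol_top (c : S.Cfg) (k : S.Stack) :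
    S.symbol (S.tape c ((c.stk k).length - 1)) k = (c.stk k).head? := by
  rw [symbol_tape]
  cases c.stk k <;> simp

theorem exists_reaches_exec (hP : ∀ m h, m ≠ .home → P (S.conf m c.state h (S.tape c))) :
    ∃ n, S.toTrackMachine.system.Reaches P
      (S.conf .seek c.state (c.stk (S.target (S.instr c.state))).length (S.tape c))
      (S.conf .ret (S.next c).state n (S.tape (S.next c))) := by
  have hseek h := hP .seek h (by simp)
  have htop h := hP .top h (by simp)
  have hstep := step_seek (c := c) c.state
  cases hi : S.instr c.state with
  | push k s q =>
    simp only [hi, target, execFree, tape_push c k s q] at hstep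
    simp only [next, hi, target]
    exact ⟨_, .head_eq (hseek _) hstep (.refl _)⟩
  | pop k f =>
    simp only [hi, target, execFree, Function.update_eq_self] at hstep
    have hpop := S.step_conf .top c.state ((c.stk k).length - 1) (S.tape c)
    simp only [simTrans, hi, execTop, symbol_top, tape_pop c k (f (c.stk k).head?)] at hpop
    simp only [next, hi, target]
    exact ⟨_, .head_eq (hseek _) hstep (.head_eq (htop _) hpop (.refl _))⟩
  | peek k f =>
    simp only [hi, target, execFree, Function.update_eq_self] at hstep
    have hpeek := S.step_conf .top c.state ((c.stk k).length - 1) (S.tape c)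
    simp only [simTrans, hi, execTop, symbol_top, Function.update_eq_self] at hpeek
    simp only [next, hi, target]
    exact ⟨_, .head_eq (hseek _) hstep (.head_eq (htop _) hpeek (.refl _))⟩
  | load f =>
    simp only [hi, target, execFree, Function.update_eq_self] at hstep
    simp only [next, hi, target]
    exact ⟨_, .head_eq (hseek _) hstep (.refl _)⟩
  | store b q =>
    simp only [hi, target, execFree, tape_store c _ b q] at hstep
    simp only [next, hi, target]
    exact ⟨_, .head_eq (hseek _) hstep (.refl _)⟩

theorem reaches_next (hold : ∀ m h, m ≠ .home → P (S.conf m c.state h (S.tape c)))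
    (hnew : ∀ h, P (S.conf .ret (S.next c).state h (S.tape (S.next c)))) :
    S.toTrackMachine.system.Reaches P
      (S.toTrackMachine.system.step (S.conf .home c.state 0 (S.tape c)))
      (S.conf .home (S.next c).state 0 (S.tape (S.next c))) := by
  have hhome : S.toTrackMachine.system.step (S.conf .home c.state 0 (S.tape c)) =
      S.conf .seek c.state 0 (S.tape c) := by
    rw [step_conf]
    simp [simTrans, TrackMachine.move]
  obtain ⟨n, hexec⟩ := exists_reaches_exec hold
  rw [hhome]
  exact ((reaches_seek (fun h => hold _ h (by simp)) _ le_rfl).trans hexec).trans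
    (reaches_ret hnew n)

end step

/-- The simulation of a stack machine by a track machine. -/
noncomputable def simulation :
    S.system.Simulation S.toTrackMachine.system S.blank S.toTrackMachine.blank where
  Rep x y := y = S.conf .home x.state 0 (S.tape x)
  cell n := (.mem, n)
  flags := {(.origin, 0)}
  bit_eq := by
    rintro x _ rfl n
    rfl
  start := ⟨_, rfl, reaches_clean (t := fun _ _ => false) (by simp) rfl⟩
  step := by
    rintro x _ rfl hx
    have hold {m h} (hm : m = .home → x.state ≠ S.halt) :
        S.system.Between S.toTrackMachine.system (fun n => (.mem, n)) x (S.next x)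
          (S.conf m x.state h (S.tape x)) :=
      ⟨S.not_halted_conf hm, fun _ => .inl rfl⟩
    obtain ⟨ν, hν, hrun, hlt⟩ := System.Reaches.exists_pos (hold fun _ => hx) (reaches_next
      (fun m h hm => hold fun h => absurd h hm)
      fun h => ⟨S.not_halted_conf (by simp), fun _ => .inr rfl⟩)
    refine ⟨ν, hν, hrun, hlt, fun f hf => ⟨0, hν, ?_⟩⟩
    rw [Set.mem_singleton_iff.1 hf, System.run_zero]
    rfl
  limit b hb := ⟨_, rfl, reaches_clean (t := fun n j => b (j, n)) (by simp [hb]) rfl⟩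
  halt := by
    rintro x _ rfl hx
    exact ⟨0, by rw [System.run_zero]; exact congrArg (Prod.mk Mode.home) hx, by simp⟩

end StackMachine

/-! ### Machines with primitive recursive control -/

/-- The actions of a machine with a head on a tape of bits. -/
inductive Action
  | right
  | left
  | write (b : Bool)
  | halt

namespace Action

noncomputable instance : Fintype Action :=
  ⟨{.right, .left, .write false, .write true, .halt}, by rintro (_ | _ | (_ | _) | _) <;> simp⟩

noncomputable instance : Primcodable Action := .ofEquiv _ (Fintype.equivFin Action)

/-- The head position after an action. -/
def moveHead : Action → ℕ → ℕ
  | .right, h => h + 1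
  | .left, h => h - 1
  | _, h => h

/-- The memory after an action with the head on cell `h`. -/
def writeBit : Action → ℕ → (ℕ → Bool) → ℕ → Bool
  | .write b, h, m => Function.update m h b
  | _, _, m => m

/-- The next action in the enumeration of all actions that begins with `right`. -/
def succ : Action → Action
  | .right => .left
  | .left => .write false
  | .write false => .write true
  | _ => .halt

/-- The position of an action in the enumeration given by `Action.succ`. -/
def rank : Action → ℕ
  | .right => 0
  | .left => 1
  | .write false => 2
  | .write true => 3
  | .halt => 4

theorem succ_iterate_rank (a : Action) : succ^[a.rank] .right = a := by
  rcases a with _ | _ | (_ | _) | _ <;> rfl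

open Turing.PartrecToTM2 in
theorem trNat_rank (a : Action) : trNat (2 ^ a.rank - 1) = .replicate a.rank .bit1 := by
  rcases a with _ | _ | (_ | _) | _ <;> rfl

end Action

/-- A machine with a head on a tape of bits whose control has possibly infinitely many states and
primitive recursive transition functions. -/
structure PrimrecMachine where
  State : Type
  [primcodable : Primcodable State]
  start : State
  encode_start : Encodable.encode start = 0
  action : State → Bool → Action
  next : State → Bool → State
  primrec_action : Primrec₂ action
  primrec_next : Primrec₂ next

namespace PrimrecMachine

attribute [instance] primcodable

variable (A : PrimrecMachine)

/-- A configuration of a machine with primitive recursive control. -/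
structure Cfg where
  state : A.State
  head : ℕ
  mem : ℕ → Bool

/-- The action performed in a configuration. -/
def Cfg.action {A : PrimrecMachine} (c : A.Cfg) : Action := A.action c.state (c.mem c.head)

/-- The next control state in a configuration. -/
def Cfg.nextState {A : PrimrecMachine} (c : A.Cfg) : A.State := A.next c.state (c.mem c.head)

/-- The transfinite system given by a machine with primitive recursive control. -/
abbrev system : System where
  Cfg := A.Cfg
  Cell := ℕ
  step c := ⟨c.nextState, c.action.moveHead c.head, c.action.writeBit c.head c.mem⟩
  bit c n := c.mem n
  lim b := ⟨A.start, 0, b⟩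
  Halted c := c.action = .halt

/-- The initial configuration with empty memory. -/
def blank : A.Cfg := ⟨A.start, 0, fun _ => false⟩

open Encodable Turing Turing.PartrecToTM2 Turing.ToPartrec

theorem exists_code_eval_encode₂ {α β γ : Type} [Primcodable α] [Primcodable β] [Primcodable γ]
    {f : α → β → γ} (hf : Primrec₂ f) :
    ∃ c : Code, ∀ a b, c.eval [encode a, encode b] = pure [encode (f a b)] := by
  let g (m n : ℕ) : ℕ :=
    (encode ((decode (α := α) m).bind fun a => (decode (α := β) n).map (f a))).pred
  have hg : Primrec₂ g :=
    Primrec.pred.comp (Primrec.encode.comp (Primrec.option_bind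
      (Primrec.decode.comp Primrec.fst) (Primrec.option_map
        (Primrec.decode.comp (Primrec.snd.comp Primrec.fst))
        (hf.comp (Primrec.snd.comp Primrec.fst) Primrec.snd))))
  obtain ⟨c, hc⟩ := Code.exists_code (Nat.Partrec'.of_prim ((Nat.Primrec'.prim_iff₂).2 hg).to_prim)
  refine ⟨c, fun a b => (hc (encode a ::ᵥ encode b ::ᵥ .nil)).trans ?_⟩
  simp [g]

theorem exists_code_eval : ∃ c : Code, ∀ s b,
    c.eval [encode b, encode s] = pure [2 ^ (A.action s b).rank - 1, encode (A.next s b)] := by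
  have hrank : Primrec fun a : Action => 2 ^ a.rank - 1 := .dom_finite _
  obtain ⟨c₁, h₁⟩ := exists_code_eval_encode₂ (hrank.comp₂ A.primrec_action.swap)
  obtain ⟨c₂, h₂⟩ := exists_code_eval_encode₂ A.primrec_next.swap
  exact ⟨Code.cons c₁ c₂, fun s b => by simp [Code.eval, h₁, h₂]⟩

/-- A program computing both transition functions of a machine with primitive recursive control. -/
noncomputable def code : Code := A.exists_code_eval.choose

theorem code_eval (s : A.State) (b : Bool) : A.code.eval [encode b, encode s] =
    pure [2 ^ (A.action s b).rank - 1, encode (A.next s b)] :=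
  A.exists_code_eval.choose_spec s b

/-- The labels of the program computing the transition functions. -/
noncomputable def labels : Finset Λ' := codeSupp A.code Cont'.halt

/-- The statements of the program computing the transition functions. -/
noncomputable def stmts : Finset (Option Stmt') := TM2.stmts tr A.labels

/-- The control states of the simulating stack machine. A step of the simulated machine begins in
`load`. The bit under the head is pushed in `push` and `pushOne`, the statements of the program
`PrimrecMachine.code` are executed in `exec`, the action, which the program returns in unary, is
decoded in `parse` and performed in `act`. -/
inductive SimState
  | init
  | load
  | push (b : Bool)
  | pushOne
  | exec (q : A.stmts) (v : Option Γ')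
  | parse (a : Action)
  | act (a : Action)

instance : Finite A.SimState :=
  .of_injective (β := Option (Option (Option (Bool ⊕ A.stmts × Option Γ' ⊕ Action ⊕ Action)))) (fun
    | .init => none
    | .load => some none
    | .pushOne => some (some none)
    | .push b => some (some (some (.inl b)))
    | .exec q v => some (some (some (.inr (.inl (q, v)))))
    | .parse a => some (some (some (.inr (.inr (.inl a)))))
    | .act a => some (some (some (.inr (.inr (.inr a)))))) <| by
    rintro ⟨⟩ ⟨⟩ h <;> simp_all

instance : Finite K' := .of_injective (β := Bool × Bool) (fun
    | .main => (false, false)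
    | .rev => (false, true)
    | .aux => (true, false)
    | .stack => (true, true)) <| by
  rintro ⟨⟩ ⟨⟩ h <;> simp_all

/-- The control state for executing a statement of the program. -/
noncomputable def execState (q : Stmt') (v : Option Γ') : A.SimState :=
  if h : some q ∈ A.stmts then .exec ⟨some q, h⟩ v else .init

/-- The control state for running the program. -/
noncomputable def runState : A.SimState := A.execState (tr (trNormal A.code Cont'.halt)) none

/-- The instruction that executes the first action of a statement. -/
noncomputable def stmtInstr (v : Option Γ') :
    Option Stmt' → StackInstr A.SimState (Option K') Γ'
  | none => .load fun _ => .init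
  | some (.push k f q) => .push (some k) (f v) (A.execState q v)
  | some (.peek k f q) => .peek (some k) fun s => A.execState q (f v s)
  | some (.pop k f q) => .pop (some k) fun s => A.execState q (f v s)
  | some (.load f q) => .load fun _ => A.execState q (f v)
  | some (.branch f q₁ q₂) => .load fun _ => cond (f v) (A.execState q₁ v) (A.execState q₂ v)
  | some (.goto l) => .load fun _ => A.execState (tr (l v)) v
  | some .halt => .load fun _ => .parse .right

/-- The instructions of the simulating stack machine. -/
noncomputable def simInstr : A.SimState → StackInstr A.SimState (Option K') Γ'
  | .init => .push (some .main) .cons .load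
  | .load => .load .push
  | .push b => .push (some .main) .cons (if b then .pushOne else A.runState)
  | .pushOne => .push (some .main) .bit1 A.runState
  | .exec q v => A.stmtInstr v q
  | .parse a => .pop (some .main) fun s => if s = some .bit1 then .parse a.succ else .act a
  | .act .right => .push none .cons .load
  | .act .left => .pop none fun _ => .load
  | .act (.write b) => .store b .load
  | .act .halt => .load fun _ => .load

/-- The stack machine simulating a machine with primitive recursive control: the stacks of the
program `PrimrecMachine.code` and one more stack whose height is the head position. -/
noncomputable def toStackMachine : StackMachine where
  State := A.SimState
  Stack := Option K'
  Symbol := Γ'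
  start := .init
  halt := .act .halt
  pointer := none
  instr := A.simInstr

/-- The configuration of the simulating machine with head position `h` and the stacks `S` of the
program. -/
def conf (q : A.SimState) (h : ℕ) (S : K' → List Γ') (m : ℕ → Bool) : A.toStackMachine.Cfg :=
  ⟨q, fun k => k.elim (.replicate h .cons) S, m⟩

/-- The configuration of the simulating machine with the main stack `l` and other stacks empty. -/
def mainConf (q : A.SimState) (h : ℕ) (l : List Γ') (m : ℕ → Bool) : A.toStackMachine.Cfg :=
  A.conf q h (K'.elim l [] [] []) m

section step

variable {A} {q q' : A.SimState} {k : K'} {f : Option Γ' → A.SimState}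

theorem update_elim_some {α : Type} {_ : DecidableEq (Option K')} (l : α) (S : K' → α) (k : K')
    (l' : α) : Function.update (fun o : Option K' => o.elim l S) (some k) l' =
      fun o => o.elim l (Function.update S k l') := by
  ext (_ | k') <;> simp [Function.update_apply]

theorem update_elim_none {α : Type} {_ : DecidableEq (Option K')} (l : α) (S : K' → α) (l' : α) :
    Function.update (fun o : Option K' => o.elim l S) none l' = fun o => o.elim l' S := by
  ext (_ | k') <;> simp

theorem next_push {s : Γ'} (hq : A.simInstr q = .push (some k) s q') (h : ℕ) (S : K' → List Γ')
    (m : ℕ → Bool) :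
    A.toStackMachine.next (A.conf q h S m) = A.conf q' h (Function.update S k (s :: S k)) m := by
  have : A.toStackMachine.instr (A.conf q h S m).state = _ := hq
  rw [StackMachine.next, this]
  exact congrArg (fun t => (⟨q', t, m⟩ : A.toStackMachine.Cfg)) (update_elim_some ..)

theorem next_pop (hq : A.simInstr q = .pop (some k) f) (h : ℕ) (S : K' → List Γ')
    (m : ℕ → Bool) :
    A.toStackMachine.next (A.conf q h S m) =
      A.conf (f (S k).head?) h (Function.update S k (S k).tail) m := by
  have : A.toStackMachine.instr (A.conf q h S m).state = _ := hq
  rw [StackMachine.next, this]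
  exact congrArg (fun t => (⟨f (S k).head?, t, m⟩ : A.toStackMachine.Cfg)) (update_elim_some ..)

theorem next_peek (hq : A.simInstr q = .peek (some k) f) (h : ℕ) (S : K' → List Γ')
    (m : ℕ → Bool) :
    A.toStackMachine.next (A.conf q h S m) = A.conf (f (S k).head?) h S m := by
  have : A.toStackMachine.instr (A.conf q h S m).state = _ := hq
  rw [StackMachine.next, this]
  rfl

theorem next_load {f : Bool → A.SimState} (hq : A.simInstr q = .load f) (h : ℕ) (S : K' → List Γ')
    (m : ℕ → Bool) :
    A.toStackMachine.next (A.conf q h S m) = A.conf (f (m h)) h S m := by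
  have : A.toStackMachine.instr (A.conf q h S m).state = _ := hq
  rw [StackMachine.next, this]
  simp only [conf, toStackMachine, Option.elim_none, List.length_replicate]

theorem next_act {a : Action} (ha : a ≠ .halt) (h : ℕ) (S : K' → List Γ')
    (m : ℕ → Bool) :
    A.toStackMachine.next (A.conf (.act a) h S m) =
      A.conf .load (a.moveHead h) S (a.writeBit h m) := by
  rcases a with _ | _ | b | _
  · exact congrArg (fun t => (⟨.load, t, m⟩ : A.toStackMachine.Cfg)) (update_elim_none ..)
  · refine congrArg (fun t => (⟨.load, t, m⟩ : A.toStackMachine.Cfg)) <|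
      (update_elim_none ..).trans ?_
    exact congrArg (fun l (o : Option K') => o.elim l S) (List.tail_replicate ..)
  · refine congrArg (fun t => (⟨.load, _, t⟩ : A.toStackMachine.Cfg)) ?_
    simp [Action.writeBit, toStackMachine, conf]
  · exact absurd rfl ha

end step

/-- Not halted, and with memory `m`. -/
def Idle (m : ℕ → Bool) (y : A.toStackMachine.Cfg) : Prop :=
  ¬ A.toStackMachine.system.Halted y ∧ y.mem = m

variable {A}

theorem idle_conf {q : A.SimState} (hq : q ≠ .act .halt) (h : ℕ) (S : K' → List Γ')
    (m : ℕ → Bool) : A.Idle m (A.conf q h S m) :=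
  ⟨hq, rfl⟩

theorem Idle.between {c c' : A.Cfg} {y : A.toStackMachine.Cfg} (hy : A.Idle c.mem y) :
    A.system.Between A.toStackMachine.system id c c' y :=
  ⟨hy.1, fun n => .inl (congrFun hy.2 n)⟩

theorem Idle.reaches {m : ℕ → Bool} {y z u : A.toStackMachine.Cfg} (hy : A.Idle m y)
    (hz : A.toStackMachine.next y = z) (h : A.toStackMachine.system.Reaches (A.Idle m) z u) :
    A.toStackMachine.system.Reaches (A.Idle m) y u :=
  .head_eq hy hz h

theorem execState_eq {q : Stmt'} (hq : some q ∈ A.stmts) (v : Option Γ') :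
    A.execState q v = .exec ⟨some q, hq⟩ v :=
  dif_pos hq

/-- The configuration of the simulating machine that corresponds to a configuration of the
program. -/
noncomputable def confOf (h : ℕ) (m : ℕ → Bool) (c : Cfg') : A.toStackMachine.Cfg :=
  A.conf (c.l.elim (.parse .right) fun l => A.execState (tr l) c.var) h c.stk m

theorem reaches_stepAux {q : Stmt'} (hq : some q ∈ A.stmts) (h : ℕ) (m : ℕ → Bool)
    (v : Option Γ') (S : K' → List Γ') :
    A.toStackMachine.system.Reaches (A.Idle m) (A.conf (A.execState q v) h S m)
      (confOf h m (TM2.stepAux q v S)) := by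
  induction q generalizing v S with
  | push k f q ih =>
    have hq' : some q ∈ A.stmts := TM2.stmts_trans (by simp [TM2.stmts₁, TM2.stmts₁_self]) hq
    rw [execState_eq hq]
    exact (idle_conf (by simp) ..).reaches (next_push rfl ..) (ih hq' _ _)
  | peek k f q ih =>
    have hq' : some q ∈ A.stmts := TM2.stmts_trans (by simp [TM2.stmts₁, TM2.stmts₁_self]) hq
    rw [execState_eq hq]
    exact (idle_conf (by simp) ..).reaches (next_peek rfl ..) (ih hq' _ _)
  | pop k f q ih =>
    have hq' : some q ∈ A.stmts := TM2.stmts_trans (by simp [TM2.stmts₁, TM2.stmts₁_self]) hq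
    rw [execState_eq hq]
    exact (idle_conf (by simp) ..).reaches (next_pop rfl ..) (ih hq' _ _)
  | load f q ih =>
    have hq' : some q ∈ A.stmts := TM2.stmts_trans (by simp [TM2.stmts₁, TM2.stmts₁_self]) hq
    rw [execState_eq hq]
    exact (idle_conf (by simp) ..).reaches (next_load rfl ..) (ih hq' _ _)
  | branch f q₁ q₂ ih₁ ih₂ =>
    have hq₁ : some q₁ ∈ A.stmts := TM2.stmts_trans (by simp [TM2.stmts₁, TM2.stmts₁_self]) hq
    have hq₂ : some q₂ ∈ A.stmts := TM2.stmts_trans (by simp [TM2.stmts₁, TM2.stmts₁_self]) hq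
    rw [execState_eq hq, TM2.stepAux]
    refine (idle_conf (by simp) ..).reaches (next_load rfl ..) ?_
    cases f v
    · exact ih₂ hq₂ _ _
    · exact ih₁ hq₁ _ _
  | goto | halt =>
    rw [execState_eq hq]
    exact (idle_conf (by simp) ..).reaches (next_load rfl ..) (.refl _)

theorem some_tr_mem_stmts {l : Λ'} (hl : l ∈ A.labels) : some (tr l) ∈ A.stmts :=
  Finset.some_mem_insertNone.2 (Finset.mem_biUnion.2 ⟨l, hl, TM2.stmts₁_self⟩)

theorem reaches_confOf {c c' : Cfg'} (hc : c.l ∈ A.labels.insertNone)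
    (hcc' : StateTransition.Reaches (TM2.step tr) c c') (h : ℕ) (m : ℕ → Bool) :
    A.toStackMachine.system.Reaches (A.Idle m) (confOf h m c) (confOf h m c') := by
  induction hcc' using Relation.ReflTransGen.head_induction_on with
  | refl => exact .refl _
  | @head c c₁ hstep _ ih =>
    let _ : Inhabited Λ' := ⟨trNormal A.code Cont'.halt⟩
    refine .trans ?_ (ih (TM2.step_supports tr (tr_supports A.code Cont'.halt) hstep hc))
    rcases c with ⟨_ | l, v, S⟩
    · exact absurd hstep.symm (Option.some_ne_none _)
    · obtain rfl : TM2.stepAux (tr l) v S = c₁ := Option.some.inj hstep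
      exact reaches_stepAux (some_tr_mem_stmts (Finset.some_mem_insertNone.1 hc)) h m v S

theorem reaches_code (s : A.State) (b : Bool) (h : ℕ) (m : ℕ → Bool) :
    A.toStackMachine.system.Reaches (A.Idle m)
      (A.mainConf A.runState h (trList [encode b, encode s]) m)
      (A.mainConf (.parse .right) h
        (trList [2 ^ (A.action s b).rank - 1, encode (A.next s b)]) m) := by
  have heval : PartrecToTM2.halt [2 ^ (A.action s b).rank - 1, encode (A.next s b)] ∈
      StateTransition.eval (TM2.step tr) (PartrecToTM2.init A.code [encode b, encode s]) := by
    rw [tr_eval, code_eval]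
    exact Part.mem_map _ (Part.mem_some _)
  refine reaches_confOf (c := PartrecToTM2.init A.code [encode b, encode s]) ?_
    (StateTransition.mem_eval.1 heval).1 h m
  exact Finset.some_mem_insertNone.2 (codeSupp_self _ _ (trStmts₁_self _))

theorem reaches_parse (a : Action) (i h : ℕ) (l : List Γ') (m : ℕ → Bool) :
    A.toStackMachine.system.Reaches (A.Idle m)
      (A.mainConf (.parse a) h (.replicate i .bit1 ++ .cons :: l) m)
      (A.mainConf (.act (Action.succ^[i] a)) h l m) := by
  induction i generalizing a with
  | zero =>
    refine (idle_conf (by simp) ..).reaches (next_pop rfl ..) ?_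
    simpa using .refl _
  | succ i ih =>
    refine (idle_conf (by simp) ..).reaches (next_pop rfl ..) ?_
    simpa [mainConf, List.replicate_succ] using ih a.succ

/-- The configuration of the simulating machine in which a step of the simulated machine begins. -/
def ready (c : A.Cfg) : A.toStackMachine.Cfg :=
  A.mainConf .load c.head (trList [encode c.state]) c.mem

theorem idle_ready (c : A.Cfg) : A.Idle c.mem (ready c) := idle_conf (by simp) ..

theorem reaches_act (c : A.Cfg) :
    A.toStackMachine.system.Reaches (A.Idle c.mem) (A.toStackMachine.next (ready c))
      (A.mainConf (.act c.action) c.head (trList [encode c.nextState]) c.mem) := by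
  rw [ready, mainConf, next_load rfl]
  have hrun := reaches_code c.state (c.mem c.head) c.head c.mem
  have hparse := reaches_parse (A := A) .right c.action.rank c.head
    (trList [encode c.nextState]) c.mem
  rw [Action.succ_iterate_rank, ← Action.trNat_rank] at hparse
  refine (idle_conf (by simp) ..).reaches (next_push rfl ..) (.trans ?_ (hrun.trans hparse))
  cases c.mem c.head
  · simpa using .refl _
  · refine (idle_conf (by simp) ..).reaches (next_push rfl ..) ?_
    simpa using .refl _

theorem reaches_ready (m : ℕ → Bool) : A.toStackMachine.system.Reaches (A.Idle m)
    ⟨.init, fun _ => [], m⟩ (ready ⟨A.start, 0, m⟩) := by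
  have hinit : (⟨.init, fun _ => [], m⟩ : A.toStackMachine.Cfg) = A.mainConf .init 0 [] m :=
    congrArg (fun t => (⟨.init, t, m⟩ : A.toStackMachine.Cfg)) <| by
      ext1 (_ | _ | _ | _ | _) <;> rfl
  rw [hinit]
  refine (idle_conf (by simp) ..).reaches (next_push rfl ..) ?_
  simpa [ready, mainConf, A.encode_start] using .refl _

variable (A)

/-- The simulation of a machine with primitive recursive control by a stack machine. -/
noncomputable def simulation :
    A.system.Simulation A.toStackMachine.system A.blank A.toStackMachine.blank where
  Rep c y := y = ready c
  cell := id
  flags := ∅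
  bit_eq := by
    rintro c _ rfl n
    rfl
  start := ⟨_, rfl, (reaches_ready _).mono fun _ => Idle.between⟩
  step := by
    rintro c _ rfl hc
    have hact : A.toStackMachine.system.Reaches
        (A.system.Between A.toStackMachine.system id c (A.system.step c))
        (A.toStackMachine.system.step (ready c)) (ready (A.system.step c)) :=
      ((reaches_act c).trans <|
        (idle_conf (by simpa using hc) ..).reaches (next_act hc ..) (.refl _)).mono
          fun _ => Idle.between
    obtain ⟨ν, hν, hrun, hlt⟩ := hact.exists_pos (idle_ready c).between
    exact ⟨ν, hν, hrun, hlt, by simp⟩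
  limit b _ := ⟨_, rfl, (reaches_ready b).mono fun _ => Idle.between⟩
  halt := by
    rintro c _ rfl hc
    have hact := (idle_ready c).reaches rfl (reaches_act c)
    exact (hact.mono fun _ hy => hy.1).exists_haltsAt (congrArg SimState.act hc)

end PrimrecMachine

/-! ### Task machines -/

/-- A machine with random access to a memory of bits with addresses in `Addr`, which executes the
tasks `0, 1, 2, …` and then again task `0` in limit stages. In each task it first reads bits one
after the other, where the address `ask` of the next bit depends on the task and the bits read so
far, and then performs the finitely many `writes`. The first `kept` bits read in a task are already
known in the next task. -/
structure TaskMachine (Addr : Type) [Primcodable Addr] where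
  kept : ℕ
  ask : ℕ × List Bool → Option Addr
  writes : ℕ × List Bool → List (Addr × Bool)
  halts : ℕ × List Bool → Bool
  primrec_ask : Primrec ask
  primrec_writes : Primrec writes
  primrec_halts : Primrec halts

namespace TaskMachine

section memory

variable {Addr : Type}

/-- The memory after a list of writes. -/
noncomputable def writeAll (m : Addr → Bool) (w : List (Addr × Bool)) :
    Addr → Bool :=
  w.foldl (fun m p => Function.update m p.1 p.2) m

theorem writeAll_eq_or (w : List (Addr × Bool)) (m : Addr → Bool) (a : Addr) :
    (writeAll m w a = m a ∧ ∀ v, (a, v) ∉ w) ∨ (a, writeAll m w a) ∈ w := by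
  induction w using List.reverseRecOn with
  | nil => simp [writeAll]
  | append_singleton w p ih =>
    have hlast : writeAll m (w ++ [p]) = Function.update (writeAll m w) p.1 p.2 := by
      simp [writeAll]
    rw [hlast, Function.update_apply]
    split_ifs with ha
    · simp [ha]
    · refine ih.imp (fun hw => ⟨hw.1, fun v => ?_⟩) (List.mem_append_left _)
      simp [hw.2 v, Prod.ext_iff, ha]

variable {m₀ : Addr → Bool} {w : ℕ → List (Addr × Bool)} {k : ℕ} {a : Addr} {b : Bool}

/-- The memory before task `k`, if the writes in the tasks are given by `w`. -/
noncomputable def memory (m₀ : Addr → Bool) (w : ℕ → List (Addr × Bool)) : ℕ → Addr → Bool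
  | 0 => m₀
  | k + 1 => writeAll (memory m₀ w k) (w k)

theorem memory_of_notMem (h : ∀ j < k, ∀ v, (a, v) ∉ w j) : memory m₀ w k a = m₀ a := by
  induction k with
  | zero => rfl
  | succ k ih =>
    rcases writeAll_eq_or (w k) (memory m₀ w k) a with hk | hk
    · exact hk.1.trans (ih fun j hj => h j (hj.trans k.lt_succ_self))
    · exact absurd hk (h k k.lt_succ_self _)

theorem memory_eq_or (h : ∀ j < k, ∀ v, (a, v) ∈ w j → v = b) :
    memory m₀ w k a = m₀ a ∨ memory m₀ w k a = b := by
  induction k with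
  | zero => exact .inl rfl
  | succ k ih =>
    rcases writeAll_eq_or (w k) (memory m₀ w k) a with hk | hk
    · exact (ih fun j hj => h j (hj.trans k.lt_succ_self)).imp hk.1.trans hk.1.trans
    · exact .inr (h k k.lt_succ_self _ hk)

theorem memory_of_mem {j : ℕ} {v : Bool} (hj : (a, v) ∈ w j) (hjk : j < k)
    (h : ∀ i ≥ j, ∀ v, (a, v) ∈ w i → v = b) : memory m₀ w k a = b := by
  induction k, hjk using Nat.le_induction with
  | base =>
    rcases writeAll_eq_or (w j) (memory m₀ w j) a with hk | hk
    · exact absurd hj (hk.2 v)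
    · exact h j le_rfl _ hk
  | succ k hjk ih =>
    rcases writeAll_eq_or (w k) (memory m₀ w k) a with hk | hk
    · exact hk.1.trans ih
    · exact h k (Nat.le_of_succ_le hjk) _ hk

/-- From some task on, address `a` holds the bit `b`, and nothing else is written there. -/
def Settles (m₀ : Addr → Bool) (w : ℕ → List (Addr × Bool)) (a : Addr) (b : Bool) : Prop :=
  ∃ N, ∀ k ≥ N, memory m₀ w k a = b ∧ ∀ v, (a, v) ∈ w k → v = b

theorem settles_of_mem {j : ℕ} {v : Bool} (hj : (a, v) ∈ w j)
    (h : ∀ k ≥ j, ∀ v, (a, v) ∈ w k → v = b) : Settles m₀ w a b :=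
  ⟨j + 1, fun k hk => ⟨memory_of_mem hj hk h, h k (Nat.le_of_succ_le hk)⟩⟩

theorem settles_of_eq_or_mem (hw : m₀ a = b ∨ ∃ j v, (a, v) ∈ w j)
    (h : ∀ k v, (a, v) ∈ w k → v = b) : Settles m₀ w a b := by
  rcases hw with hb | ⟨j, v, hj⟩
  · exact ⟨0, fun k _ => ⟨(memory_eq_or fun j _ => h j).elim (·.trans hb) id, h k⟩⟩
  · exact settles_of_mem hj fun k _ => h k

end memory

variable {Addr : Type} [Primcodable Addr] (T : TaskMachine Addr)

/-- A state of a task machine: the number of the task, the bits read and the pending writes. -/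
abbrev State (Addr : Type) : Type := (ℕ × List Bool) × List (Addr × Bool)

/-- The address accessed in a state. -/
def address (s : State Addr) : Option Addr := s.2.head?.elim (T.ask s.1) (some ·.1)

/-- The bit stored at the accessed address if the bit found there is `b`. -/
def newBit (s : State Addr) (b : Bool) : Bool := s.2.head?.elim b (·.2)

/-- The next state if the bit found at the accessed address is `b`. -/
def nextState (s : State Addr) (b : Bool) : State Addr :=
  bif s.2.head?.isSome then (s.1, s.2.tail)
  else bif (T.ask s.1).isSome then ((s.1.1, s.1.2 ++ [b]), [])
  else ((s.1.1 + 1, s.1.2.take T.kept), T.writes s.1)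

/-- The machine halts in a state. -/
def haltsIn (s : State Addr) : Bool :=
  !s.2.head?.isSome && (!(T.ask s.1).isSome && T.halts s.1)

/-- A configuration of a task machine. -/
structure Cfg (Addr : Type) where
  state : State Addr
  mem : Addr → Bool

/-- The configuration that begins task `0`. -/
def begin {Addr : Type} (m : Addr → Bool) : Cfg Addr := ⟨((0, []), []), m⟩

/-- The bit found at the accessed address. -/
def bitRead (c : Cfg Addr) : Bool := (T.address c.state).elim false c.mem

/-- The transfinite system given by a task machine. -/
noncomputable abbrev system : System where
  Cfg := Cfg Addr
  Cell := Addr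
  step c := ⟨T.nextState c.state (T.bitRead c),
    c.state.2.head?.elim c.mem fun p => Function.update c.mem p.1 p.2⟩
  bit c a := c.mem a
  lim := begin
  Halted c := T.haltsIn c.state = true

/-- The head position at which the accessed address is found, where `h` is the present one. -/
def target (s : State Addr) (h : ℕ) : ℕ := (T.address s).elim h Encodable.encode

/-- The action of the simulating machine: to move the head to the accessed address, and then to
write there. -/
def simAction (s : State Addr × ℕ) (b : Bool) : Action :=
  if s.2 < T.target s.1 s.2 then .right
  else if T.target s.1 s.2 < s.2 then .left
  else if T.haltsIn s.1 = true then .halt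
  else if newBit s.1 b = true then .write true else .write false

/-- The next state of the simulating machine. -/
def simNext (s : State Addr × ℕ) (b : Bool) : State Addr × ℕ :=
  if s.2 < T.target s.1 s.2 then (s.1, s.2 + 1)
  else if T.target s.1 s.2 < s.2 then (s.1, s.2 - 1)
  else (T.nextState s.1 b, s.2)

section primrec

theorem primrec_head? : Primrec fun s : State Addr => s.2.head? :=
  .comp .list_head? .snd

theorem primrec_address : Primrec T.address := by
  refine (Primrec.option_casesOn primrec_head? (T.primrec_ask.comp .fst)
    (Primrec.option_some.comp (Primrec.fst.comp .snd)).to₂).of_eq fun s => ?_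
  rw [address]
  cases s.2.head? <;> rfl

theorem primrec_newBit : Primrec₂ (newBit (Addr := Addr)) := by
  refine (Primrec.option_casesOn (primrec_head?.comp .fst) .snd
    (Primrec.snd.comp .snd).to₂).of_eq fun p => ?_
  rw [newBit]
  cases p.1.2.head? <;> rfl

theorem primrec_nextState : Primrec₂ T.nextState := by
  have hlog : Primrec fun p : State Addr × Bool => p.1.1 := .comp .fst .fst
  have htask : Primrec fun p : State Addr × Bool => p.1.1.1 := .comp .fst hlog
  have hbits : Primrec fun p : State Addr × Bool => p.1.1.2 := .comp .snd hlog
  exact .cond (.comp .option_isSome (primrec_head?.comp .fst))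
    (.pair hlog (.comp .list_tail (.comp .snd .fst)))
    (.cond (.comp .option_isSome (T.primrec_ask.comp hlog))
      (.pair (.pair htask (Primrec.list_concat.comp hbits .snd)) (.const []))
      (.pair (.pair (.comp .succ htask) (Primrec.list_take.comp (.const _) hbits))
        (T.primrec_writes.comp hlog)))

theorem primrec_haltsIn : Primrec T.haltsIn :=
  Primrec.and.comp (.comp .not (.comp .option_isSome primrec_head?))
    (Primrec.and.comp (.comp .not (.comp .option_isSome (T.primrec_ask.comp .fst)))
      (T.primrec_halts.comp .fst))

theorem primrec_target : Primrec₂ T.target := by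
  refine (Primrec.option_casesOn (T.primrec_address.comp .fst) .snd
    (Primrec.encode.comp .snd).to₂).of_eq fun p => ?_
  rw [target]
  cases T.address p.1 <;> rfl

theorem primrec_simAction : Primrec₂ T.simAction := by
  have hstate : Primrec fun p : (State Addr × ℕ) × Bool => p.1.1 := .comp .fst .fst
  have hhead : Primrec fun p : (State Addr × ℕ) × Bool => p.1.2 := .comp .snd .fst
  have htarget := T.primrec_target.comp hstate hhead
  exact .ite (Primrec.nat_lt.comp hhead htarget) (.const _)
    (.ite (Primrec.nat_lt.comp htarget hhead) (.const _)
      (.ite (Primrec.eq.comp (T.primrec_haltsIn.comp hstate) (.const true)) (.const _)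
        (.ite (Primrec.eq.comp (primrec_newBit.comp hstate .snd) (.const true)) (.const _)
          (.const _))))

theorem primrec_simNext : Primrec₂ T.simNext := by
  have hstate : Primrec fun p : (State Addr × ℕ) × Bool => p.1.1 := .comp .fst .fst
  have hhead : Primrec fun p : (State Addr × ℕ) × Bool => p.1.2 := .comp .snd .fst
  have htarget := T.primrec_target.comp hstate hhead
  exact .ite (Primrec.nat_lt.comp hhead htarget) (.pair hstate (.comp .succ hhead))
    (.ite (Primrec.nat_lt.comp htarget hhead) (.pair hstate (.comp .pred hhead))
      (.pair (T.primrec_nextState.comp hstate .snd) hhead))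

end primrec

/-- The machine with primitive recursive control simulating a task machine. Its control stores the
head position. -/
def toPrimrecMachine : PrimrecMachine where
  State := State Addr × ℕ
  start := (((0, []), []), 0)
  encode_start := rfl
  action := T.simAction
  next := T.simNext
  primrec_action := T.primrec_simAction
  primrec_next := T.primrec_simNext

/-- A configuration of the simulating machine. -/
def conf (s : State Addr) (h : ℕ) (m : ℕ → Bool) : T.toPrimrecMachine.Cfg := ⟨(s, h), h, m⟩

/-- Not halted, and with memory `m`. -/
def Idle (m : ℕ → Bool) (y : T.toPrimrecMachine.Cfg) : Prop :=
  ¬ T.toPrimrecMachine.system.Halted y ∧ y.mem = m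

variable {T} {s : State Addr} {h : ℕ} {m : ℕ → Bool} {a : Addr}

theorem action_conf : (T.conf s h m).action = T.simAction (s, h) (m h) := rfl

theorem step_conf : T.toPrimrecMachine.system.step (T.conf s h m) =
    ⟨T.simNext (s, h) (m h), (T.simAction (s, h) (m h)).moveHead h,
      (T.simAction (s, h) (m h)).writeBit h m⟩ := rfl

theorem target_eq (ha : T.address s = some a) : T.target s h = Encodable.encode a := by
  rw [target, ha, Option.elim_some]

theorem reaches_right (ha : T.address s = some a) (hle : h ≤ Encodable.encode a) :
    T.toPrimrecMachine.system.Reaches (T.Idle m) (T.conf s h m)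
      (T.conf s (Encodable.encode a) m) := by
  induction hle using Nat.decreasingInduction with
  | self => exact .refl _
  | of_succ h hlt ih =>
    have hact b : T.simAction (s, h) b = .right := if_pos (by rwa [target_eq ha])
    have hnext b : T.simNext (s, h) b = (s, h + 1) := if_pos (by rwa [target_eq ha])
    refine .head_eq ⟨?_, rfl⟩ ?_ ih
    · simp [action_conf, hact]
    · rw [step_conf, hact, hnext]
      rfl

theorem reaches_left (ha : T.address s = some a) (hle : Encodable.encode a ≤ h) :
    T.toPrimrecMachine.system.Reaches (T.Idle m) (T.conf s h m)
      (T.conf s (Encodable.encode a) m) := by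
  induction h, hle using Nat.le_induction with
  | base => exact .refl _
  | succ h hle ih =>
    have hlt : Encodable.encode a < h + 1 := Nat.lt_succ_of_le hle
    have hact b : T.simAction (s, h + 1) b = .left := by
      simp [simAction, target_eq ha, hlt, hlt.not_gt]
    have hnext b : T.simNext (s, h + 1) b = (s, h) := by
      simp [simNext, target_eq ha, hlt, hlt.not_gt]
    refine .head_eq ⟨?_, rfl⟩ ?_ ih
    · simp [action_conf, hact]
    · rw [step_conf, hact, hnext]
      rfl

theorem reaches_target (s : State Addr) (h : ℕ) (m : ℕ → Bool) :
    T.toPrimrecMachine.system.Reaches (T.Idle m) (T.conf s h m)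
      (T.conf s (T.target s h) m) := by
  rcases ha : T.address s with _ | a
  · rw [target, ha]
    exact .refl _
  · rw [target_eq ha]
    exact (le_total h _).elim (reaches_right ha) (reaches_left ha)

theorem target_target (s : State Addr) (h : ℕ) : T.target s (T.target s h) = T.target s h := by
  rw [target, target]
  cases T.address s <;> rfl

theorem simAction_target (s : State Addr) (h : ℕ) (b : Bool) :
    T.simAction (s, T.target s h) b =
      if T.haltsIn s = true then .halt else .write (newBit s b) := by
  simp only [simAction, target_target, lt_irrefl, if_false]
  cases newBit s b <;> rfl

theorem halted_target_iff : T.toPrimrecMachine.system.Halted (T.conf s (T.target s h) m) ↔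
    T.haltsIn s = true := by
  change T.simAction (s, T.target s h) _ = .halt ↔ _
  rw [simAction_target]
  split <;> simp_all

theorem step_target (hs : ¬ T.haltsIn s = true) :
    T.toPrimrecMachine.system.step (T.conf s (T.target s h) m) =
      T.conf (T.nextState s (m (T.target s h))) (T.target s h)
        (Function.update m (T.target s h) (newBit s (m (T.target s h)))) := by
  rw [step_conf, simAction_target, if_neg hs]
  simp only [simNext, target_target, lt_irrefl, if_false]
  rfl

theorem nextState_target {c : Cfg Addr} (hm : ∀ a, m (Encodable.encode a) = c.mem a) (h : ℕ) :
    T.nextState c.state (m (T.target c.state h)) = T.nextState c.state (T.bitRead c) := by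
  rcases ha : T.address c.state with _ | a
  · rcases hw : c.state.2.head? with _ | p
    · have hask : T.ask c.state.1 = none := by simpa [address, hw] using ha
      simp [nextState, hw, hask]
    · simp [address, hw] at ha
  · rw [target_eq ha, hm, bitRead, ha, Option.elim_some]

theorem update_target {c : Cfg Addr} (hm : ∀ a, m (Encodable.encode a) = c.mem a) (h : ℕ)
    (a : Addr) :
    Function.update m (T.target c.state h) (newBit c.state (m (T.target c.state h)))
      (Encodable.encode a) = (T.system.step c).mem a := by
  rcases hw : c.state.2.head? with _ | p
  · simp [newBit, hw, hm]
  · have ha : T.address c.state = some p.1 := by simp [address, hw]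
    simp [newBit, hw, target_eq ha, Function.update_apply, hm]

variable (T)

/-- The simulation of a task machine by a machine with primitive recursive control. -/
def simulation :
    T.system.Simulation T.toPrimrecMachine.system (begin fun _ => false)
      T.toPrimrecMachine.blank where
  Rep c y := ∃ h m, y = T.conf c.state h m ∧ ∀ a, m (Encodable.encode a) = c.mem a
  cell := Encodable.encode
  flags := ∅
  bit_eq := by
    rintro c _ ⟨h, m, rfl, hm⟩ a
    exact hm a
  start := ⟨_, ⟨0, fun _ => false, rfl, fun _ => rfl⟩, .refl _⟩
  step := by
    rintro c _ ⟨h, m, rfl, hm⟩ hc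
    have hreach := (reaches_target (T := T) c.state h m).mono fun y hy =>
      (⟨hy.1, fun a => .inl ((congrFun hy.2 _).trans (hm a))⟩ :
        T.system.Between T.toPrimrecMachine.system Encodable.encode c (T.system.step c) y)
    have htarget : T.system.Between T.toPrimrecMachine.system Encodable.encode c
        (T.system.step c) (T.conf c.state (T.target c.state h) m) :=
      ⟨fun hhalt => hc (halted_target_iff.1 hhalt), fun a => .inl (hm a)⟩
    obtain ⟨ν, hν, hrun, hlt⟩ := hreach.exists_pos_step htarget
    refine ⟨ν, hν, ⟨T.target c.state h, _, ?_, update_target hm h⟩, hlt, by simp⟩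
    rw [hrun, step_target hc, nextState_target hm]
  limit b _ := ⟨_, ⟨0, b, rfl, fun _ => rfl⟩, .refl _⟩
  halt := by
    rintro c _ ⟨h, m, rfl, -⟩ hc
    exact ((reaches_target c.state h m).mono fun _ hy => hy.1).exists_haltsAt
      (halted_target_iff.2 hc)

variable {T} {k : ℕ} {m m' : Addr → Bool} {l l' : List Bool}

/-- Task `k`, having read the bits `l`, reads from the memory `m` until it has the bits `l'`. -/
inductive Reads (T : TaskMachine Addr) (k : ℕ) (m : Addr → Bool) : List Bool → List Bool → Prop
  | done {l : List Bool} (h : T.ask (k, l) = none) : Reads T k m l l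
  | ask {l l' : List Bool} {a : Addr} (h : T.ask (k, l) = some a)
      (h' : Reads T k m (l ++ [m a]) l') : Reads T k m l l'

/-- Not halted, and with the memory `m` after some of the writes in `w`. -/
def Working (T : TaskMachine Addr) (m : Addr → Bool) (w : List (Addr × Bool)) (c : Cfg Addr) :
    Prop :=
  ¬ T.system.Halted c ∧ ∀ a, c.mem a = m a ∨ (a, c.mem a) ∈ w

theorem Working.mem_eq_or {m₀ : Addr → Bool} {w : ℕ → List (Addr × Bool)} {c : Cfg Addr} {a : Addr}
    {b : Bool} (h : T.Working (memory m₀ w k) (w k) c) (hw : ∀ j v, (a, v) ∈ w j → v = b) :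
    c.mem a = m₀ a ∨ c.mem a = b :=
  (h.2 a).elim (fun hc => (memory_eq_or fun j _ => hw j).imp hc.trans hc.trans)
    fun hc => .inr (hw k _ hc)

theorem reads_of_ask_eq_getElem? {as : List Addr} {b : Addr → Bool} {i : ℕ} (hi : i ≤ as.length)
    (hask : ∀ j ≥ i, j ≤ as.length → T.ask (k, (as.take j).map b) = as[j]?)
    (hm : ∀ a ∈ as.drop i, m a = b a) : T.Reads k m ((as.take i).map b) (as.map b) := by
  induction hi using Nat.decreasingInduction with
  | self =>
    rw [List.take_length]
    exact .done (by simpa using hask _ le_rfl le_rfl)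
  | of_succ i hi ih =>
    rw [List.drop_eq_getElem_cons hi, List.forall_mem_cons] at hm
    have htail := ih (fun j hj => hask j (Nat.le_of_succ_le hj)) hm.2
    refine .ask (a := as[i]) ((hask i le_rfl hi.le).trans (List.getElem?_eq_getElem hi)) ?_
    rwa [hm.1, ← List.map_singleton, ← List.map_append, List.take_append_getElem]

theorem Reads.ask_eq_none (h : T.Reads k m l l') : T.ask (k, l') = none := by
  induction h with
  | done h => exact h
  | ask _ _ ih => exact ih

theorem Reads.not_haltsIn (h : T.Reads k m l l') (hl' : T.halts (k, l') = false) :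
    ¬ T.haltsIn ((k, l), []) = true := by
  cases h with
  | done h => simp [haltsIn, hl']
  | ask h _ => simp [haltsIn, h]

theorem Reads.reaches (h : T.Reads k m l l') :
    T.system.Reaches (fun c => ¬ T.system.Halted c ∧ c.mem = m) ⟨((k, l), []), m⟩
      ⟨((k, l'), []), m⟩ := by
  induction h with
  | done => exact .refl _
  | ask h _ ih =>
    refine .head_eq ⟨by simp [haltsIn, h], rfl⟩ ?_ ih
    simp [nextState, bitRead, address, h]

theorem Reads.exists_haltsAt (h : T.Reads k m l l') (hl' : T.halts (k, l') = true) :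
    ∃ ν, T.system.HaltsAt ⟨((k, l), []), m⟩ ν :=
  (h.reaches.mono fun _ hy => hy.1).exists_haltsAt (by simp [haltsIn, h.ask_eq_none, hl'])

theorem reaches_writeAll {w w' : List (Addr × Bool)} (hw : w ⊆ w')
    (hm : ∀ a, m a = m' a ∨ (a, m a) ∈ w') :
    T.system.Reaches (T.Working m' w') ⟨((k, l), w), m⟩ ⟨((k, l), []), writeAll m w⟩ := by
  induction w generalizing m with
  | nil => exact .refl _
  | cons p w ih =>
    obtain ⟨hp, hw⟩ := List.cons_subset.1 hw
    have hwork : T.Working m' w' ⟨((k, l), p :: w), m⟩ := ⟨by simp [haltsIn], hm⟩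
    have hstep : T.system.step ⟨((k, l), p :: w), m⟩ =
        ⟨((k, l), w), Function.update m p.1 p.2⟩ := by simp [nextState]
    refine .head_eq hwork hstep (ih hw fun a => ?_)
    rw [Function.update_apply]
    split_ifs with ha
    · exact .inr (by simpa [ha] using hp)
    · exact hm a

theorem Reads.exists_run_succ (h : T.Reads k m l l') (hl' : T.halts (k, l') = false) :
    ∃ ν > 0, T.system.run ⟨((k, l), []), m⟩ ν =
        ⟨((k + 1, l'.take T.kept), []), writeAll m (T.writes (k, l'))⟩ ∧
      ∀ ζ < ν, T.Working m (T.writes (k, l')) (T.system.run ⟨((k, l), []), m⟩ ζ) := by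
  have hread := h.reaches.mono (P' := T.Working m (T.writes (k, l')))
    fun y hy => ⟨hy.1, fun a => .inl (congrFun hy.2 a)⟩
  have hwrite : T.system.Reaches (T.Working m (T.writes (k, l')))
      (T.system.step ⟨((k, l'), []), m⟩)
      ⟨((k + 1, l'.take T.kept), []), writeAll m (T.writes (k, l'))⟩ := by
    convert reaches_writeAll (List.Subset.refl _) fun a => .inl rfl using 1
    simp [nextState, h.ask_eq_none]
  have hdone : T.Working m (T.writes (k, l')) ⟨((k, l'), []), m⟩ :=
    ⟨(Reads.done h.ask_eq_none : T.Reads k m l' l').not_haltsIn hl', fun _ => .inl rfl⟩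
  obtain ⟨ν, hν, hrun, hlt⟩ := hread.exists_pos_step hdone
  obtain ⟨μ, hμ, hlt'⟩ := hwrite
  refine ⟨ν + μ, hν.trans_le le_self_add, by rw [System.run_add, hrun, hμ], ?_⟩
  exact System.forall_run_lt_add hlt (by rwa [hrun])

theorem exists_run_eq_begin {m₀ b : Addr → Bool} {l : ℕ → List Bool}
    {w : ℕ → List (Addr × Bool)} (hw : ∀ k, T.writes (k, l k) = w k)
    (hzero : T.Reads 0 m₀ [] (l 0))
    (hsucc : ∀ k, T.Reads (k + 1) (memory m₀ w (k + 1)) ((l k).take T.kept) (l (k + 1)))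
    (hhalts : ∀ k, T.halts (k, l k) = false) (hb : ∀ a, Settles m₀ w a (b a)) :
    ∃ ν, T.system.run (begin m₀) ν = begin b ∧
      (∀ ζ < ν, ∃ k, T.Working (memory m₀ w k) (w k) (T.system.run (begin m₀) ζ)) ∧
      ∀ k, ∃ ζ < ν, (T.system.run (begin m₀) ζ).mem = memory m₀ w k := by
  let known (k : ℕ) : List Bool := k.casesOn [] fun k => (l k).take T.kept
  have hread (k : ℕ) : T.Reads k (memory m₀ w k) (known k) (l k) := by
    cases k with
    | zero => exact hzero
    | succ k => exact hsucc k
  have htask (k : ℕ) := (hread k).exists_run_succ (hhalts k)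
  simp only [hw] at htask
  obtain ⟨ν, hrun, hlt, hmem⟩ := System.exists_run_eq_lim (S := T.system)
    (y := fun k => (⟨((k, known k), []), memory m₀ w k⟩ : Cfg Addr)) htask (b := b) fun a => by
      obtain ⟨N, hN⟩ := hb a
      exact ⟨N, fun k hk z hz => (hz.2 a).elim (·.trans (hN k hk).1) ((hN k hk).2 _)⟩
  refine ⟨ν, hrun, hlt, fun k => ?_⟩
  obtain ⟨ζ, hζ, hζk⟩ := hmem k
  exact ⟨ζ, hζ, congrArg Cfg.mem hζk⟩

end TaskMachine

/-! ### Families of machines -/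

/-- Infinitely many infinite time Turing machines, given uniformly by primitive recursive
functions. Machine `0` has a special role: it is the clock. -/
structure MachineFamily where
  start : ℕ → ℕ
  limit : ℕ → ℕ
  halt : ℕ → ℕ
  next : ℕ → ℕ × (Fin 3 → Bool) → ℕ × (Fin 3 → Bool) × Bool
  primrec_start : Primrec start
  primrec_limit : Primrec limit
  primrec_halt : Primrec halt
  primrec_next : Primrec₂ next

namespace MachineFamily

/-- A joint configuration of the machines of a family. Besides their states, head positions and
tapes it records which machines are `done`, that is, have been in their halt state before, whether
a machine other than the clock has `fired`, that is, halted for the first time, since the last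
restart of the clock, and whether the clock is due for a `restart`. -/
structure Cfg where
  state : ℕ → ℕ
  head : ℕ → ℕ
  tape : ℕ → Fin 3 → ℕ → Bool
  done : ℕ → Bool
  fired : Bool
  restart : Bool

/-- The cells of a joint configuration, whose values persist in limit stages. -/
inductive Cell
  | tape (r : ℕ) (i : Fin 3) (n : ℕ)
  | done (r : ℕ)
  | fired
  | restart

namespace Cfg

/-- The value of a cell. -/
def bit (c : Cfg) : Cell → Bool
  | .tape r i n => c.tape r i n
  | .done r => c.done r
  | .fired => c.fired
  | .restart => c.restart

/-- Machine `r` is restarted in the next step. -/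
def resets (c : Cfg) (r : ℕ) : Bool := r == 0 && c.restart

/-- A code of the state and the head position of machine `r`. -/
def code (c : Cfg) (r : ℕ) : ℕ := Nat.pair (c.state r) (c.head r)

end Cfg

variable (F : MachineFamily)

/-- The instruction that machine `r` is about to execute. -/
def instr (c : Cfg) (r : ℕ) : ℕ × (Fin 3 → Bool) × Bool :=
  F.next r (c.state r, fun i => c.tape r i (c.head r))

/-- Some machine other than the clock halts for the first time. -/
def Fires (c : Cfg) : Prop := ∃ r, r ≠ 0 ∧ c.done r = false ∧ c.state r = F.halt r

/-- One joint step of all machines. The clock is restarted one step after it has halted. -/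
noncomputable def step (c : Cfg) : Cfg where
  state r := bif c.resets r then F.start r else (F.instr c r).1
  head r := bif c.resets r then 0
    else bif (F.instr c r).2.2 then c.head r + 1 else c.head r - 1
  tape r i n := bif c.resets r then false
    else if n = c.head r then (F.instr c r).2.1 i else c.tape r i n
  done r := c.done r || c.state r == F.halt r
  fired := !c.restart && (c.fired || decide (F.Fires c))
  restart := !c.restart && c.state 0 == F.halt 0

/-- The joint configuration at a limit stage at which the cells have the values `b`. -/
def lim (b : Cell → Bool) : Cfg where
  state := F.limit
  head _ := 0
  tape r i n := b (.tape r i n)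
  done r := b (.done r)
  fired := b .fired
  restart := b .restart

/-- The initial joint configuration. -/
def blank : Cfg where
  state := F.start
  head _ := 0
  tape _ _ _ := false
  done _ := false
  fired := false
  restart := false

/-- The joint run of all machines. It halts when the clock runs out and no machine has halted for
the first time since the clock was started. -/
noncomputable abbrev system : System where
  Cfg := Cfg
  Cell := Cell
  step := F.step
  bit := Cfg.bit
  lim := F.lim
  Halted c := c.restart = false ∧ c.state 0 = F.halt 0 ∧ c.fired = false

/-- The addresses of the memory in which joint configurations are stored. -/
abbrev Addr : Type := (ℕ × Fin 3 × ℕ) ⊕ (ℕ × ℕ) ⊕ ℕ ⊕ Fin 3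

namespace Addr

/-- The address of cell `n` on tape `i` of machine `r`. -/
abbrev tape (r : ℕ) (i : Fin 3) (n : ℕ) : Addr := .inl (r, i, n)

/-- The address of the bit that tells whether `n` encodes state and head position of
machine `r`. -/
abbrev mark (r n : ℕ) : Addr := .inr (.inl (r, n))

/-- The address of the bit that tells whether machine `r` is done. -/
abbrev done (r : ℕ) : Addr := .inr (.inr (.inl r))

/-- The address of a bit that is set for a while in every simulated step, but never between two
of them. In a limit stage it is hence set if and only if a limit of steps has been reached. -/
abbrev flash : Addr := .inr (.inr (.inr 0))

/-- The address of the bit that tells whether a machine has fired. -/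
abbrev fired : Addr := .inr (.inr (.inr 1))

/-- The address of the bit that tells whether the clock is due for a restart. -/
abbrev restart : Addr := .inr (.inr (.inr 2))

/-- The addresses accessed by machine `r` with head position `h`. -/
def row (r h : ℕ) : List Addr := done r :: (List.finRange 3).map (tape r · h)

end Addr

/-- The code of the start state and head position `0`. -/
def startCode (r : ℕ) : ℕ := Nat.pair (F.start r) 0

/-- The bit stored at address `mark r n` if machine `r` has code `m`. It is inverted at the code
of the initial configuration, which thereby is represented by an empty memory. -/
def markBit (r m n : ℕ) : Bool := (n == m) ^^ (n == F.startCode r)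

/-- The memory storing a joint configuration. -/
def encode (c : Cfg) : Addr → Bool
  | .inl (r, i, n) => c.tape r i n
  | .inr (.inl (r, n)) => F.markBit r (c.code r) n
  | .inr (.inr (.inl r)) => c.done r
  | .inr (.inr (.inr i)) => ![false, c.fired, c.restart] i

/-- The address at which a cell is stored. -/
def Cell.addr : Cell → Addr
  | .tape r i n => .tape r i n
  | .done r => .done r
  | .fired => .fired
  | .restart => .restart

/-- The number of a task together with the bits read so far. Task `r` is responsible for
machine `r`. It reads `flash`, `restart` and `fired`, then `mark r 0`, `mark r 1`, … up to the mark
of the present code, and finally the addresses in `Addr.row`. -/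
abbrev Log : Type := ℕ × List Bool

section log

variable (p : Log)

/-- The bit read at `flash`. -/
def flashRead : Bool := p.2.getD 0 false

/-- The bit read at `restart`. -/
def restartRead : Bool := p.2.getD 1 false

/-- The bit read at `fired`. -/
def firedRead : Bool := p.2.getD 2 false

/-- The code found by reading the marks, or the number of marks read so far. -/
def codeRead : ℕ :=
  (List.range (p.2.length - 3)).findIdx fun n => p.2.getD (n + 3) false ^^ (n == F.startCode p.1)

/-- The state of the machine. -/
def stateRead : ℕ := (F.codeRead p).unpair.1

/-- The head position of the machine. -/
def headRead : ℕ := (F.codeRead p).unpair.2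

/-- The bits read after the marks. -/
def rowRead (j : ℕ) : Bool := p.2.getD (F.codeRead p + 4 + j) false

/-- The machine is in its halt state. -/
def haltRead : Bool := F.stateRead p == F.halt p.1

/-- The machine is restarted in the next step. -/
def resetsRead : Bool := p.1 == 0 && restartRead p

/-- The instruction that the machine is about to execute. -/
def instrRead : ℕ × (Fin 3 → Bool) × Bool :=
  F.next p.1 (F.stateRead p, fun i => F.rowRead p (i + 1))

/-- The code of the machine after the step. -/
def nextCode : ℕ :=
  Nat.pair (bif resetsRead p then F.start p.1 else (F.instrRead p).1)
    (bif resetsRead p then 0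
      else bif (F.instrRead p).2.2 then F.headRead p + 1 else F.headRead p - 1)

/-- The address to be read next. -/
def ask : Option Addr :=
  if p.2.length < 3 then [Addr.flash, Addr.restart, Addr.fired][p.2.length]?
  else if flashRead p = true then none
  else if p.2.length = F.codeRead p + 3 then some (Addr.mark p.1 (F.codeRead p))
  else (Addr.row p.1 (F.headRead p))[p.2.length - (F.codeRead p + 4)]?

/-- The writes in a limit stage, which turn the memory into that of a limit configuration. -/
def limitWrites (k : ℕ) : List (Addr × Bool) :=
  [(Addr.flash, false), (Addr.mark k.unpair.1 k.unpair.2,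
    F.markBit k.unpair.1 (Nat.pair (F.limit k.unpair.1) 0) k.unpair.2)]

/-- The writes that concern only the machine itself. -/
def rowWrites : List (Addr × Bool) :=
  (Addr.mark p.1 (F.codeRead p), F.markBit p.1 (F.nextCode p) (F.codeRead p)) ::
  (Addr.mark p.1 (F.nextCode p), F.markBit p.1 (F.nextCode p) (F.nextCode p)) ::
  (Addr.done p.1, F.rowRead p 0 || F.haltRead p) ::
  (List.finRange 3).map fun i =>
    (Addr.tape p.1 i (F.headRead p), bif resetsRead p then false else (F.instrRead p).2.1 i)

/-- The writes that concern the clock and the bits `restart` and `fired`. For a restart of the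
clock, every task clears a single cell on each of its tapes. -/
def clockWrites : List (Addr × Bool) :=
  bif restartRead p then
    (Addr.restart, false) :: (Addr.fired, false) ::
      (List.finRange 3).map fun i => (Addr.tape 0 i p.1, false)
  else bif p.1 == 0 then [(Addr.restart, F.haltRead p)]
  else bif !F.rowRead p 0 && F.haltRead p then [(Addr.fired, true)] else []

/-- The writes of a task. -/
def writes : List (Addr × Bool) :=
  bif flashRead p then F.limitWrites p.1
  else (Addr.flash, p.1 == 0) :: (F.rowWrites p ++ F.clockWrites p)

/-- The criterion for halting. -/
def halts : Bool :=
  !flashRead p && (p.1 == 0 && (!restartRead p && (F.haltRead p && !firedRead p)))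

end log

section primrec

theorem primrec_startCode : Primrec F.startCode := Primrec₂.natPair.comp F.primrec_start (.const 0)

variable {α : Type} [Primcodable α]

theorem primrec_tape (i : Fin 3) {r n : α → ℕ} (hr : Primrec r) (hn : Primrec n) :
    Primrec fun a => Addr.tape (r a) i (n a) :=
  Primrec.sumInl.comp (.pair hr (.pair (.const i) hn))

theorem primrec_mark {r n : α → ℕ} (hr : Primrec r) (hn : Primrec n) :
    Primrec fun a => Addr.mark (r a) (n a) :=
  Primrec.sumInr.comp (Primrec.sumInl.comp (.pair hr hn))

theorem primrec_done {r : α → ℕ} (hr : Primrec r) : Primrec fun a => Addr.done (r a) :=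
  Primrec.sumInr.comp (Primrec.sumInr.comp (Primrec.sumInl.comp hr))

theorem primrec_markBit {r m n : α → ℕ} (hr : Primrec r) (hm : Primrec m) (hn : Primrec n) :
    Primrec fun a => F.markBit (r a) (m a) (n a) :=
  (Primrec.dom_bool₂ Bool.xor).comp (Primrec.beq.comp hn hm)
    (Primrec.beq.comp hn (F.primrec_startCode.comp hr))

theorem primrec_write {a : α → Addr} {v : α → Bool} {w : α → List (Addr × Bool)}
    (ha : Primrec a) (hv : Primrec v) (hw : Primrec w) : Primrec fun x => (a x, v x) :: w x :=
  Primrec.list_cons.comp (.pair ha hv) hw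

theorem primrec_tapeWrites {r n : α → ℕ} {v : α → Fin 3 → Bool} (hr : Primrec r)
    (hn : Primrec n) (hv : Primrec₂ v) :
    Primrec fun a => (List.finRange 3).map fun i => (Addr.tape (r a) i (n a), v a i) :=
  have hwrite (i : Fin 3) : Primrec fun a => (Addr.tape (r a) i (n a), v a i) :=
    .pair (primrec_tape i hr hn) (hv.comp .id (.const i))
  (Primrec.list_cons.comp (hwrite 0) (Primrec.list_cons.comp (hwrite 1)
    (Primrec.list_cons.comp (hwrite 2) (.const []))))

theorem primrec_row {r h : α → ℕ} (hr : Primrec r) (hh : Primrec h) :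
    Primrec fun a => Addr.row (r a) (h a) :=
  Primrec.list_cons.comp (primrec_done hr) (Primrec.list_cons.comp (primrec_tape 0 hr hh)
    (Primrec.list_cons.comp (primrec_tape 1 hr hh)
      (Primrec.list_cons.comp (primrec_tape 2 hr hh) (.const []))))

theorem primrec_bitRead (n : ℕ) : Primrec fun p : Log => p.2.getD n false :=
  (Primrec.list_getD false).comp .snd (.const n)

theorem primrec_codeRead : Primrec F.codeRead := by
  have hmark : Primrec₂ fun (p : Log) (n : ℕ) => p.2.getD (n + 3) false :=
    (Primrec.list_getD false).comp (.comp .snd .fst) (Primrec.nat_add.comp .snd (.const 3))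
  have hstart : Primrec₂ fun (p : Log) (n : ℕ) => n == F.startCode p.1 :=
    Primrec.beq.comp .snd (F.primrec_startCode.comp (.comp .fst .fst))
  exact .list_findIdx
    (.comp .list_range (Primrec.nat_sub.comp (.comp .list_length .snd) (.const 3)))
    ((Primrec.dom_bool₂ Bool.xor).comp₂ hmark hstart)

theorem primrec_stateRead : Primrec F.stateRead :=
  Primrec.fst.comp (Primrec.unpair.comp F.primrec_codeRead)

theorem primrec_headRead : Primrec F.headRead :=
  Primrec.snd.comp (Primrec.unpair.comp F.primrec_codeRead)

theorem primrec_rowRead : Primrec₂ F.rowRead :=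
  (Primrec.list_getD false).comp (.comp .snd .fst) (Primrec.nat_add.comp
    (Primrec.nat_add.comp (F.primrec_codeRead.comp .fst) (.const 4)) .snd)

theorem primrec_haltRead : Primrec F.haltRead :=
  Primrec.beq.comp F.primrec_stateRead (F.primrec_halt.comp .fst)

theorem primrec_task_eq_zero : Primrec fun p : Log => p.1 == 0 := Primrec.beq.comp .fst (.const 0)

theorem primrec_resetsRead : Primrec resetsRead :=
  Primrec.and.comp primrec_task_eq_zero (primrec_bitRead 1)

theorem primrec_instrRead : Primrec F.instrRead := by
  have hbits : Primrec₂ fun (p : Log) (i : Fin 3) => F.rowRead p (i + 1) :=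
    F.primrec_rowRead.comp .fst (.comp .succ (.comp .fin_val .snd))
  exact F.primrec_next.comp .fst (.pair F.primrec_stateRead (Primrec.fin_curry.2 hbits))

theorem primrec_nextCode : Primrec F.nextCode :=
  Primrec₂.natPair.comp
    (.cond primrec_resetsRead (F.primrec_start.comp .fst) (.comp .fst F.primrec_instrRead))
    (.cond primrec_resetsRead (.const 0) (.cond (.comp .snd (.comp .snd F.primrec_instrRead))
      (.comp .succ F.primrec_headRead) (.comp .pred F.primrec_headRead)))

theorem primrec_ask : Primrec F.ask := by
  have hlength : Primrec fun p : Log => p.2.length := .comp .list_length .snd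
  have hcode (n : ℕ) : Primrec fun p : Log => F.codeRead p + n :=
    Primrec.nat_add.comp F.primrec_codeRead (.const n)
  exact .ite (Primrec.nat_lt.comp hlength (.const 3))
    (Primrec.list_getElem?.comp (.const _) hlength)
    (.ite (Primrec.eq.comp (primrec_bitRead 0) (.const true)) (.const none)
      (.ite (Primrec.eq.comp hlength (hcode 3))
        (.comp .option_some (primrec_mark .fst F.primrec_codeRead))
        (Primrec.list_getElem?.comp (primrec_row .fst F.primrec_headRead)
          (Primrec.nat_sub.comp hlength (hcode 4)))))

theorem primrec_limitWrites : Primrec F.limitWrites := by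
  have hr : Primrec fun k : ℕ => k.unpair.1 := .comp .fst .unpair
  have hn : Primrec fun k : ℕ => k.unpair.2 := .comp .snd .unpair
  have hlimit : Primrec fun k : ℕ => Nat.pair (F.limit k.unpair.1) 0 :=
    Primrec₂.natPair.comp (F.primrec_limit.comp hr) (.const 0)
  exact primrec_write (.const _) (.const _)
    (primrec_write (primrec_mark hr hn) (F.primrec_markBit hr hlimit hn) (.const []))

theorem primrec_rowWrites : Primrec F.rowWrites := by
  have hbit : Primrec₂ fun (p : Log) (i : Fin 3) =>
      bif resetsRead p then false else (F.instrRead p).2.1 i :=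
    .cond (primrec_resetsRead.comp .fst) (.const false)
      (Primrec.fin_app.comp (.comp .fst (.comp .snd (F.primrec_instrRead.comp .fst))) .snd)
  exact primrec_write (primrec_mark .fst F.primrec_codeRead)
    (F.primrec_markBit .fst F.primrec_nextCode F.primrec_codeRead)
    (primrec_write (primrec_mark .fst F.primrec_nextCode)
      (F.primrec_markBit .fst F.primrec_nextCode F.primrec_nextCode)
      (primrec_write (primrec_done .fst)
        (Primrec.or.comp (F.primrec_rowRead.comp .id (.const 0)) F.primrec_haltRead)
        (primrec_tapeWrites .fst F.primrec_headRead hbit)))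

theorem primrec_clockWrites : Primrec F.clockWrites :=
  .cond (primrec_bitRead 1)
    (primrec_write (.const _) (.const _) (primrec_write (.const _) (.const _)
      (primrec_tapeWrites (.const 0) .fst (.const false))))
    (.cond primrec_task_eq_zero (primrec_write (.const _) F.primrec_haltRead (.const []))
      (.cond (Primrec.and.comp (.comp .not (F.primrec_rowRead.comp .id (.const 0)))
        F.primrec_haltRead) (.const _) (.const _)))

theorem primrec_writes : Primrec F.writes :=
  .cond (primrec_bitRead 0) (F.primrec_limitWrites.comp .fst)
    (primrec_write (.const _) primrec_task_eq_zero
      (Primrec.list_append.comp F.primrec_rowWrites F.primrec_clockWrites))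

theorem primrec_halts : Primrec F.halts :=
  Primrec.and.comp (.comp .not (primrec_bitRead 0)) (Primrec.and.comp primrec_task_eq_zero
    (Primrec.and.comp (.comp .not (primrec_bitRead 1))
      (Primrec.and.comp F.primrec_haltRead (.comp .not (primrec_bitRead 2)))))

end primrec

/-- The task machine simulating the joint run of a family. -/
def toTaskMachine : TaskMachine Addr where
  kept := 3
  ask := F.ask
  writes := F.writes
  halts := F.halts
  primrec_ask := F.primrec_ask
  primrec_writes := F.primrec_writes
  primrec_halts := F.primrec_halts

variable (F : MachineFamily) (c : Cfg) (k : ℕ)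

/-- The addresses read by task `k`. -/
def addrs : List Addr :=
  [Addr.flash, Addr.restart, Addr.fired] ++
    ((List.range (c.code k + 1)).map (Addr.mark k) ++ Addr.row k (c.head k))

/-- The bits read by task `k`. -/
def allRead : List Bool := (addrs c k).map (F.encode c)

variable {c k} {j n : ℕ}

theorem length_addrs : (addrs c k).length = c.code k + 8 := by
  simp [addrs, Addr.row]

theorem getElem?_addrs_mark (hn : n ≤ c.code k) : (addrs c k)[n + 3]? = some (Addr.mark k n) := by
  have hn' : n < c.code k + 1 := Nat.lt_succ_of_le hn
  simp [addrs, List.getElem?_append, hn']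

theorem getElem?_addrs_row : (addrs c k)[c.code k + 4 + j]? = (Addr.row k (c.head k))[j]? := by
  have hmarks : ([Addr.flash, Addr.restart, Addr.fired] ++
      (List.range (c.code k + 1)).map (Addr.mark k)).length = c.code k + 4 := by simp
  rw [addrs, ← List.append_assoc, List.getElem?_append_right (by omega), hmarks,
    Nat.add_sub_cancel_left]

variable {F}

theorem codeRead_take (hj : j ≤ (addrs c k).length) :
    F.codeRead (k, ((addrs c k).take j).map (F.encode c)) = min (j - 3) (c.code k) := by
  have hbit : ∀ n < j - 3, n ≤ c.code k →
      ((((addrs c k).take j).map (F.encode c)).getD (n + 3) false ^^ (n == F.startCode k)) =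
        (n == c.code k) := by
    intro n hnj hn
    have hnj' : n + 3 < j := by omega
    have hmark : F.encode c (Addr.mark k n) = F.markBit k (c.code k) n := rfl
    rw [List.getD_eq_getElem?_getD, List.getElem?_map, List.getElem?_take_of_lt hnj',
      getElem?_addrs_mark hn, Option.map_some, Option.getD_some, hmark, markBit,
      Bool.xor_assoc, Bool.xor_self, Bool.xor_false]
  have hlength : (((addrs c k).take j).map (F.encode c)).length = j := by simpa using hj
  rw [codeRead, hlength]
  rcases le_or_gt (j - 3) (c.code k) with hle | hlt
  · rw [min_eq_left hle, List.findIdx_eq_length_of_false, List.length_range]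
    intro n hn
    rw [List.mem_range] at hn
    exact (hbit n hn (hn.le.trans hle)).trans (beq_false_of_ne (hn.trans_le hle).ne)
  · rw [min_eq_right hlt.le, List.findIdx_eq (by simpa using hlt)]
    simp only [List.getElem_range]
    refine ⟨?_, fun n hn => ?_⟩
    · exact (hbit _ hlt le_rfl).trans (beq_self_eq_true _)
    · exact (hbit n (hn.trans hlt) hn.le).trans (beq_false_of_ne hn.ne)

theorem ask_take (hj : j ≤ (addrs c k).length) :
    F.ask (k, ((addrs c k).take j).map (F.encode c)) = (addrs c k)[j]? := by
  have hlength : (((addrs c k).take j).map (F.encode c)).length = j := by simpa using hj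
  rw [ask, headRead, codeRead_take hj, hlength]
  rcases lt_or_ge j 3 with hj3 | hj3
  · rw [if_pos hj3, addrs, List.getElem?_append_left (by simpa using hj3)]
  · obtain ⟨n, rfl⟩ := Nat.exists_eq_add_of_le' hj3
    have hflash : flashRead (k, ((addrs c k).take (n + 3)).map (F.encode c)) = false := rfl
    rw [if_neg hj3.not_gt, if_neg (Bool.eq_false_iff.1 hflash), Nat.add_sub_cancel]
    rcases le_or_gt n (c.code k) with hle | hlt
    · rw [min_eq_left hle, if_pos rfl, getElem?_addrs_mark hle]
    · obtain ⟨i, rfl⟩ := Nat.exists_eq_add_of_lt hlt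
      rw [min_eq_right hlt.le, if_neg (by omega), Cfg.code, Nat.unpair_pair, ← Cfg.code,
        show c.code k + i + 1 + 3 = c.code k + 4 + i by omega, getElem?_addrs_row,
        Nat.add_sub_cancel_left]

section

variable (F c k)

theorem codeRead_allRead : F.codeRead (k, F.allRead c k) = c.code k := by
  have h := codeRead_take (F := F) (c := c) (k := k) le_rfl
  rw [List.take_length, length_addrs] at h
  rw [allRead, h]
  omega

theorem stateRead_allRead : F.stateRead (k, F.allRead c k) = c.state k := by
  rw [stateRead, codeRead_allRead, Cfg.code, Nat.unpair_pair]

theorem headRead_allRead : F.headRead (k, F.allRead c k) = c.head k := by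
  rw [headRead, codeRead_allRead, Cfg.code, Nat.unpair_pair]

theorem rowRead_allRead (j : ℕ) : F.rowRead (k, F.allRead c k) j =
    ((Addr.row k (c.head k)).map (F.encode c)).getD j false := by
  rw [rowRead, codeRead_allRead, allRead, List.getD_eq_getElem?_getD, List.getD_eq_getElem?_getD,
    List.getElem?_map, List.getElem?_map, getElem?_addrs_row]

theorem doneRead_allRead : F.rowRead (k, F.allRead c k) 0 = c.done k := rowRead_allRead F c k 0

theorem haltRead_allRead : F.haltRead (k, F.allRead c k) = (c.state k == F.halt k) := by
  rw [haltRead, stateRead_allRead]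

theorem instrRead_allRead : F.instrRead (k, F.allRead c k) = F.instr c k := by
  have htape (i : Fin 3) : F.rowRead (k, F.allRead c k) (i + 1) = c.tape k i (c.head k) := by
    rw [rowRead_allRead]
    fin_cases i <;> rfl
  simp only [instrRead, stateRead_allRead, htape, instr]

theorem resetsRead_allRead : resetsRead (k, F.allRead c k) = c.resets k := rfl

theorem nextCode_allRead : F.nextCode (k, F.allRead c k) = (F.step c).code k := by
  rw [nextCode, instrRead_allRead, headRead_allRead, resetsRead_allRead]
  rfl

theorem halts_allRead : F.halts (k, F.allRead c k) = true ↔ k = 0 ∧ F.system.Halted c := by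
  have hrestart : restartRead (k, F.allRead c k) = c.restart := rfl
  have hfired : firedRead (k, F.allRead c k) = c.fired := rfl
  have hflash : flashRead (k, F.allRead c k) = false := rfl
  simp only [halts, haltRead_allRead, hrestart, hfired, hflash, Bool.and_eq_true, beq_iff_eq,
    Bool.not_eq_true', true_and]
  grind

end

variable (F c k)

/-- The addresses concerning only machine `k` to which task `k` writes. -/
noncomputable def rowTouched : List Addr :=
  Addr.mark k (c.code k) :: Addr.mark k ((F.step c).code k) :: Addr.row k (c.head k)

/-- The addresses concerning the clock to which task `k` writes. -/
def clockTouched : List Addr :=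
  bif c.restart then Addr.restart :: Addr.fired :: (List.finRange 3).map (Addr.tape 0 · k)
  else bif k == 0 then [Addr.restart]
  else bif !c.done k && c.state k == F.halt k then [Addr.fired] else []

theorem rowWrites_allRead : F.rowWrites (k, F.allRead c k) =
    (F.rowTouched c k).map fun a => (a, F.encode (F.step c) a) := by
  have htape (i : Fin 3) : (bif c.resets k then false else (F.instr c k).2.1 i) =
      (F.step c).tape k i (c.head k) := by simp [step]
  rw [rowWrites, codeRead_allRead, nextCode_allRead, headRead_allRead, doneRead_allRead,
    haltRead_allRead, resetsRead_allRead, instrRead_allRead, rowTouched, Addr.row]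
  simp only [htape, List.map_cons, List.map_map]
  rfl

theorem clockWrites_allRead : F.clockWrites (k, F.allRead c k) =
    (F.clockTouched c k).map fun a => (a, F.encode (F.step c) a) := by
  have hrestartRead : restartRead (k, F.allRead c k) = c.restart := rfl
  have hrestart : F.encode (F.step c) .restart = (!c.restart && c.state 0 == F.halt 0) := rfl
  have hfired : F.encode (F.step c) .fired = (!c.restart && (c.fired || decide (F.Fires c))) := rfl
  rw [clockWrites, hrestartRead, haltRead_allRead, doneRead_allRead, clockTouched]
  rcases hc : c.restart with _ | _
  · rcases eq_or_ne k 0 with rfl | hk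
    · simp [hrestart, hc]
    · have hk0 : (k == 0) = false := beq_false_of_ne hk
      rcases hfire : !c.done k && c.state k == F.halt k with _ | _
      · simp [hk0]
      · have hfires : F.Fires c := ⟨k, hk, by simpa using hfire⟩
        simp [hk0, hfired, hc, hfires]
  · have htape (i : Fin 3) : F.encode (F.step c) (.tape 0 i k) = false := by
      simp [encode, step, Cfg.resets, hc]
    rw [hc, Bool.not_true, Bool.false_and] at hrestart hfired
    simp [hrestart, hfired, htape]

theorem writes_allRead : F.writes (k, F.allRead c k) = (Addr.flash, k == 0) ::
    (F.rowTouched c k ++ F.clockTouched c k).map fun a => (a, F.encode (F.step c) a) := by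
  rw [List.map_append, ← rowWrites_allRead, ← clockWrites_allRead]
  rfl

variable {F c k} {a : Addr} {v : Bool}

theorem flash_notMem_touched : Addr.flash ∉ F.rowTouched c k ++ F.clockTouched c k := by
  simp only [rowTouched, clockTouched, Addr.row, Bool.cond_eq_ite]
  split_ifs <;> simp

theorem flash_mem_writes (h : (Addr.flash, v) ∈ F.writes (k, F.allRead c k)) : v = (k == 0) := by
  rw [writes_allRead, List.mem_cons, List.mem_map] at h
  rcases h with h | ⟨a, ha, h⟩
  · exact congrArg Prod.snd h
  · obtain rfl : a = Addr.flash := congrArg Prod.fst h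
    exact absurd ha flash_notMem_touched

theorem mem_writes_iff (ha : a ≠ Addr.flash) : (a, v) ∈ F.writes (k, F.allRead c k) ↔
    a ∈ F.rowTouched c k ++ F.clockTouched c k ∧ v = F.encode (F.step c) a := by
  rw [writes_allRead, List.mem_cons, List.mem_map]
  grind

theorem notMem_writes_of_lt {j : ℕ} (hj : j < k) (ha : a ∈ (addrs c k).drop 3) :
    (a, v) ∉ F.writes (j, F.allRead c j) := by
  have haddrs : (addrs c k).drop 3 =
    (List.range (c.code k + 1)).map (Addr.mark k) ++ Addr.row k (c.head k) := rfl
  rw [haddrs, Addr.row, List.mem_append, List.mem_map, List.mem_cons, List.mem_map] at ha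
  rw [writes_allRead, rowTouched, clockTouched, Addr.row]
  simp only [Bool.cond_eq_ite]
  rcases ha with ⟨n, -, rfl⟩ | rfl | ⟨i, -, rfl⟩ <;> split_ifs <;> simp <;> omega

theorem exists_mem_touched_of_step_tape_ne {r n : ℕ} {i : Fin 3}
    (h : c.tape r i n ≠ (F.step c).tape r i n) :
    ∃ k, Addr.tape r i n ∈ F.rowTouched c k ++ F.clockTouched c k := by
  by_cases hn : n = c.head r
  · exact ⟨r, by simp [rowTouched, Addr.row, hn]⟩
  · have hr : c.resets r = true := by
      by_contra hr
      simp [step, hr, hn] at h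
    obtain ⟨rfl, hrestart⟩ : r = 0 ∧ c.restart = true := by simpa [Cfg.resets] using hr
    exact ⟨n, by simp [clockTouched, hrestart]⟩

theorem exists_mem_touched_of_step_fired_ne (h : c.fired ≠ (F.step c).fired) :
    ∃ k, Addr.fired ∈ F.rowTouched c k ++ F.clockTouched c k := by
  rcases hrestart : c.restart with _ | _
  · have hfires : F.Fires c := by
      by_contra hfires
      simp [step, hrestart, hfires] at h
    obtain ⟨r, hr, hdone, hhalt⟩ := hfires
    exact ⟨r, by simp [clockTouched, beq_false_of_ne hr, hrestart, hdone, hhalt]⟩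
  · exact ⟨0, by simp [clockTouched, hrestart]⟩

theorem exists_mem_touched (ha : a ≠ Addr.flash) (h : F.encode c a ≠ F.encode (F.step c) a) :
    ∃ k, a ∈ F.rowTouched c k ++ F.clockTouched c k := by
  rcases a with ⟨r, i, n⟩ | ⟨r, n⟩ | r | i
  · exact exists_mem_touched_of_step_tape_ne h
  · refine ⟨r, List.mem_append_left _ ?_⟩
    by_contra hn
    simp only [rowTouched, List.mem_cons, not_or, Sum.inr.injEq, Sum.inl.injEq, Prod.mk.injEq,
      true_and] at hn
    simp [encode, markBit, hn.1, hn.2.1] at h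
  · exact ⟨r, by simp [rowTouched, Addr.row]⟩
  · fin_cases i
    · exact absurd rfl ha
    · exact exists_mem_touched_of_step_fired_ne h
    · exact ⟨0, by cases hrestart : c.restart <;> simp [clockTouched, hrestart]⟩

theorem reads_allRead {m : Addr → Bool} (hm : ∀ a ∈ (addrs c k).drop 3, m a = F.encode c a) :
    F.toTaskMachine.Reads k m [false, c.restart, c.fired] (F.allRead c k) :=
  TaskMachine.reads_of_ask_eq_getElem? (i := 3) (by rw [length_addrs]; omega)
    (fun _ _ => ask_take) hm

theorem reads_zero (c : Cfg) : F.toTaskMachine.Reads 0 (F.encode c) [] (F.allRead c 0) :=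
  TaskMachine.reads_of_ask_eq_getElem? (i := 0) zero_le (fun _ _ => ask_take) fun _ _ => rfl

theorem settles_step (c : Cfg) (a : Addr) :
    TaskMachine.Settles (F.encode c) (fun k => F.writes (k, F.allRead c k)) a
      (F.encode (F.step c) a) := by
  rcases eq_or_ne a Addr.flash with rfl | ha
  · refine TaskMachine.settles_of_mem (j := 1) (v := false) ?_ fun k hk v hv => ?_
    · simp [writes_allRead]
    · exact (flash_mem_writes hv).trans (beq_false_of_ne (Nat.ne_of_gt hk))
  · refine TaskMachine.settles_of_eq_or_mem ?_ fun k v hv => ((mem_writes_iff ha).1 hv).2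
    by_contra! h
    obtain ⟨k, hk⟩ := exists_mem_touched ha h.1
    exact h.2 k _ ((mem_writes_iff ha).2 ⟨hk, rfl⟩)

open TaskMachine (begin)

theorem exists_run_eq_begin_step (hc : ¬ F.system.Halted c) :
    ∃ ν, F.toTaskMachine.system.run (begin (F.encode c)) ν = begin (F.encode (F.step c)) ∧
      (∀ ζ < ν, F.system.Between F.toTaskMachine.system Cell.addr c (F.step c)
        (F.toTaskMachine.system.run (begin (F.encode c)) ζ)) ∧
      ∃ ζ < ν, (F.toTaskMachine.system.run (begin (F.encode c)) ζ).mem Addr.flash = true := by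
  have hsucc (k : ℕ) := reads_allRead (F := F) (c := c) (k := k + 1)
    (m := TaskMachine.memory (F.encode c) (fun k => F.writes (k, F.allRead c k)) (k + 1))
    fun a ha => TaskMachine.memory_of_notMem fun j hj v => notMem_writes_of_lt hj ha
  have hhalts (k : ℕ) : F.halts (k, F.allRead c k) = false :=
    Bool.eq_false_iff.2 fun h => hc ((halts_allRead F c k).1 h).2
  obtain ⟨ν, hrun, hwork, hmem⟩ := F.toTaskMachine.exists_run_eq_begin (fun _ => rfl)
    (reads_zero c) hsucc hhalts (settles_step c)
  refine ⟨ν, hrun, fun ζ hζ => ?_, ?_⟩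
  · obtain ⟨k, hk⟩ := hwork ζ hζ
    refine ⟨hk.1, fun i => ?_⟩
    have hflash : i.addr ≠ Addr.flash := by cases i <;> simp [Cell.addr]
    have hbit := hk.mem_eq_or fun j v hv => ((mem_writes_iff hflash).1 hv).2
    cases i <;> exact hbit
  · obtain ⟨ζ, hζ, hζmem⟩ := hmem 1
    refine ⟨ζ, hζ, ?_⟩
    rw [hζmem]
    have hset : (Addr.flash, true) ∈ F.writes (0, F.allRead c 0) := by simp [writes_allRead]
    exact (TaskMachine.writeAll_eq_or _ _ _).elim (fun h => absurd hset (h.2 true)) flash_mem_writes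

theorem eq_encode_lim_of_mem_limitWrites {b : Addr → Bool} (h : (a, v) ∈ F.limitWrites k) :
    v = F.encode (F.lim (b ∘ Cell.addr)) a := by
  simp only [limitWrites, List.mem_cons, Prod.mk.injEq, List.not_mem_nil, or_false] at h
  rcases h with ⟨rfl, rfl⟩ | ⟨rfl, rfl⟩ <;> rfl

theorem settles_limit (b : Addr → Bool) (a : Addr) :
    TaskMachine.Settles b F.limitWrites a (F.encode (F.lim (b ∘ Cell.addr)) a) := by
  refine TaskMachine.settles_of_eq_or_mem ?_ fun _ _ => eq_encode_lim_of_mem_limitWrites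
  rcases a with ⟨r, i, n⟩ | ⟨r, n⟩ | r | i
  · exact .inl rfl
  · exact .inr ⟨Nat.pair r n, F.markBit r (Nat.pair (F.limit r) 0) n, by simp [limitWrites]⟩
  · exact .inl rfl
  · fin_cases i
    · exact .inr ⟨0, false, by simp [limitWrites]⟩
    · exact .inl rfl
    · exact .inl rfl

theorem reaches_begin_lim {b : Addr → Bool} (hb : b Addr.flash = true) :
    F.toTaskMachine.system.Reaches
      (F.system.Between F.toTaskMachine.system Cell.addr (F.lim (b ∘ Cell.addr))
        (F.lim (b ∘ Cell.addr))) (begin b) (begin (F.encode (F.lim (b ∘ Cell.addr)))) := by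
  let l : List Bool := [true, b Addr.restart, b Addr.fired]
  have hzero : F.toTaskMachine.Reads 0 b [] l := by
    refine .ask (a := Addr.flash) rfl (.ask (a := Addr.restart) rfl (.ask (a := Addr.fired) rfl ?_))
    rw [hb]
    exact .done rfl
  obtain ⟨ν, hrun, hwork, -⟩ := F.toTaskMachine.exists_run_eq_begin (l := fun _ => l)
    (w := F.limitWrites) (fun _ => rfl) hzero (fun _ => .done rfl) (fun _ => rfl) (settles_limit b)
  refine ⟨ν, hrun, fun ζ hζ => ?_⟩
  obtain ⟨k, hk⟩ := hwork ζ hζ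
  refine ⟨hk.1, fun i => .inl ?_⟩
  have hbit := hk.mem_eq_or (a := i.addr) fun j v => eq_encode_lim_of_mem_limitWrites (b := b)
  cases i <;> exact hbit.elim id id

theorem encode_blank : F.encode F.blank = fun _ => false := by
  ext a
  rcases a with ⟨r, i, n⟩ | ⟨r, n⟩ | r | i
  · rfl
  · exact Bool.xor_self _
  · rfl
  · fin_cases i <;> rfl

variable (F)

/-- The simulation of the joint run of a family by a task machine. -/
noncomputable def simulation :
    F.system.Simulation F.toTaskMachine.system F.blank (begin fun _ => false) where
  Rep c y := y = begin (F.encode c)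
  cell := Cell.addr
  flags := {Addr.flash}
  bit_eq := by
    rintro c _ rfl i
    cases i <;> rfl
  start := ⟨_, rfl, by rw [encode_blank]; exact .refl _⟩
  step := by
    rintro c _ rfl hc
    obtain ⟨ν, hrun, hbetween, ζ, hζ, hflash⟩ := exists_run_eq_begin_step hc
    refine ⟨ν, pos_of_gt hζ, hrun, hbetween, ?_⟩
    rintro _ rfl
    exact ⟨ζ, hζ, hflash⟩
  limit b hb := ⟨_, rfl, reaches_begin_lim (hb _ rfl)⟩
  halt := by
    rintro c _ rfl hc
    exact (reads_zero c).exists_haltsAt ((halts_allRead F c 0).2 ⟨rfl, hc⟩)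

end MachineFamily

/-! ### The gap -/

theorem eq_true_iff_exists_lt {b : Ordinal → Bool} {Event : Ordinal → Prop} {α o : Ordinal}
    (hzero : b 0 = false) (hadd : ∀ ζ < α, b (ζ + 1) = true ↔ b ζ = true ∨ Event ζ)
    (hlimit : ∀ ζ ≤ α, Order.IsSuccLimit ζ → b ζ = limsupBit ζ b) (ho : o ≤ α) :
    b o = true ↔ ∃ ζ < o, Event ζ := by
  induction o using Ordinal.limitRecOn with
  | zero => simp [hzero]
  | add_one o ih =>
    have hoα : o < α := (lt_add_one o).trans_le ho
    simp only [hadd o hoα, ih hoα.le, Order.lt_add_one_iff, le_iff_lt_or_eq, or_and_right,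
      exists_or, exists_eq_left]
  | limit o hl ih =>
    rw [hlimit o ho hl, limsupBit_eq_true]
    constructor
    · intro hcofinal
      obtain ⟨γ, ⟨-, hγ⟩, hbγ⟩ := hcofinal 0 hl.bot_lt
      obtain ⟨ζ, hζ, hevent⟩ := (ih γ hγ (hγ.le.trans ho)).1 hbγ
      exact ⟨ζ, hζ.trans hγ, hevent⟩
    · rintro ⟨ζ, hζ, hevent⟩ β hβ
      have hmax : max β (ζ + 1) < o := max_lt hβ (hl.add_one_lt hζ)
      exact ⟨_, ⟨le_max_left _ _, hmax⟩, (ih _ hmax (hmax.le.trans ho)).2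
        ⟨ζ, (lt_add_one ζ).trans_le (le_max_right _ _), hevent⟩⟩

namespace MachineFamily

/-- An instruction: the next state, the values to write, and whether to move to the right. -/
abbrev Instr : Type := ℕ × (Fin 3 → Bool) × Bool

/-- A description of a machine: its start, limit and halt states and its instructions, listed by
the codes of the state and the values read. -/
abbrev Descr : Type := ℕ × ℕ × ℕ × List Instr

/-- The element of `β` with code `n`, or a default value if there is none. -/
def ofCode (β : Type) [Primcodable β] [Inhabited β] (n : ℕ) : β :=
  (Encodable.decode n).getD default

theorem ofCode_encode {β : Type} [Primcodable β] [Inhabited β] (x : β) :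
    ofCode β (Encodable.encode x) = x := by
  rw [ofCode, Encodable.encodek, Option.getD_some]

theorem primrec_ofCode (β : Type) [Primcodable β] [Inhabited β] : Primrec (ofCode β) :=
  Primrec.option_getD.comp Primrec.decode (Primrec.const default)

/-- The value of the function given by the list `l`, whose entries are indexed by the codes of
the arguments. -/
def lookup {β γ : Type} [Primcodable β] [Inhabited γ] (l : List γ) (x : β) : γ :=
  l.getD (Encodable.encode x) default

theorem primrec_lookup {β γ : Type} [Primcodable β] [Primcodable γ] [Inhabited γ] :
    Primrec₂ (lookup : List γ → β → γ) :=
  (Primrec.list_getD default).comp .fst (Primrec.encode.comp .snd)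

theorem exists_lookup_eq {β γ : Type} [Primcodable β] [Inhabited β] [Inhabited γ] (f : β → γ)
    {s : Set β} (hs : s.Finite) : ∃ l, ∀ x ∈ s, lookup l x = f x := by
  obtain ⟨N, hN⟩ := (hs.image Encodable.encode).bddAbove
  refine ⟨(List.range (N + 1)).map fun k => f (ofCode β k), fun x hx => ?_⟩
  have hlt : Encodable.encode x < N + 1 := Nat.lt_succ_of_le (hN ⟨x, hx, rfl⟩)
  rw [lookup, List.getD_eq_getElem _ _ (by simpa using hlt), List.getElem_map,
    List.getElem_range, ofCode_encode]

/-- The description of machine `r` in the family of all machines with clock number `e`. -/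
def descrOf (e r : ℕ) : Descr := ofCode Descr (if r = 0 then e else r - 1)

theorem primrec_descrOf (e : ℕ) : Primrec (descrOf e) :=
  (primrec_ofCode Descr).comp (Primrec.ite (Primrec.eq.comp .id (.const 0)) (.const e) .pred)

/-- The family of all machines, preceded by a clock, which is the machine with number `e`. -/
def all (e : ℕ) : MachineFamily where
  start r := (descrOf e r).1
  limit r := (descrOf e r).2.1
  halt r := (descrOf e r).2.2.1
  next r x := lookup (descrOf e r).2.2.2 x
  primrec_start := Primrec.fst.comp (primrec_descrOf e)
  primrec_limit := Primrec.fst.comp (Primrec.snd.comp (primrec_descrOf e))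
  primrec_halt := Primrec.fst.comp (Primrec.snd.comp (Primrec.snd.comp (primrec_descrOf e)))
  primrec_next := primrec_lookup.comp
    (Primrec.snd.comp (Primrec.snd.comp (Primrec.snd.comp ((primrec_descrOf e).comp .fst)))) .snd

/-- Machine `r` of the family is the machine `M`. -/
structure IsRow (F : MachineFamily) (r : ℕ) (M : Machine) : Prop where
  start_eq : F.start r = M.start
  limit_eq : F.limit r = M.limit
  halt_eq : F.halt r = M.halt
  next_eq : ∀ (q : Fin (M.Q + 1)) (v : Fin 3 → Bool),
    F.next r (q, v) = Prod.map Fin.val id (M.trans (q, v))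

theorem exists_lookup_eq_trans (M : Machine) : ∃ l : List Instr,
    ∀ (q : Fin (M.Q + 1)) (v : Fin 3 → Bool),
      lookup l ((q : ℕ), v) = Prod.map Fin.val id (M.trans (q, v)) := by
  obtain ⟨l, hl⟩ := exists_lookup_eq
    (fun x : ℕ × (Fin 3 → Bool) => (Prod.map Fin.val id (M.trans (Fin.ofNat _ x.1, x.2)) : Instr))
    (Set.finite_range (Prod.map Fin.val id : Fin (M.Q + 1) × (Fin 3 → Bool) → _))
  refine ⟨l, fun q v => (hl _ ⟨(q, v), rfl⟩).trans ?_⟩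
  simp

theorem exists_code (M : Machine) : ∃ n, (all n).IsRow 0 M ∧ ∀ e, (all e).IsRow (n + 1) M := by
  obtain ⟨l, hl⟩ := exists_lookup_eq_trans M
  obtain ⟨n, hn⟩ : ∃ n, ofCode Descr n = (↑M.start, ↑M.limit, ↑M.halt, l) := ⟨_, ofCode_encode _⟩
  have isRow {e r : ℕ} (hr : descrOf e r = ofCode Descr n) : (all e).IsRow r M := by
    constructor <;> simp only [all, hr, hn]
    exact hl
  exact ⟨n, isRow rfl, fun e => isRow rfl⟩

variable {F : MachineFamily} {r : ℕ} {M : Machine} {c : Cfg} {α o : Ordinal.{0}}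

/-- Machine `r` is in the situation described by the snapshot `s`. -/
structure IsAt (c : Cfg) (r : ℕ) (s : Snapshot M.Q) : Prop where
  state_eq : c.state r = s.state
  head_eq : c.head r = s.head
  tape_eq : c.tape r = s.tape

theorem IsRow.isAt_step (h : F.IsRow r M) {s : Snapshot M.Q} (hs : IsAt c r s)
    (hr : c.resets r = false) : IsAt (F.step c) r (M.stepSnap s) := by
  have hinstr : F.instr c r =
      Prod.map Fin.val id (M.trans (s.state, fun i => s.tape i s.head)) := by
    rw [instr, hs.state_eq, hs.head_eq, hs.tape_eq]
    exact h.next_eq _ _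
  constructor
  · simp [step, hr, hinstr, Machine.stepSnap]
  · simp [step, hr, hinstr, Machine.stepSnap, hs.head_eq, Bool.cond_eq_ite]
  · ext i n
    simp [step, hr, hinstr, Machine.stepSnap, hs.head_eq, hs.tape_eq]

theorem IsRow.isAt_run (h : F.IsRow r M) (hc : IsAt c r (M.init zeroR))
    (hr : ∀ ζ < o, (F.system.run c ζ).resets r = false) :
    IsAt (F.system.run c o) r (M.snap zeroR o) := by
  induction o using Ordinal.limitRecOn with
  | zero => rwa [System.run_zero, Machine.snap_eq_run, System.run_zero]
  | add_one o ih =>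
    rw [System.run_add_one, Machine.snap_add_one]
    exact h.isAt_step (ih fun ζ hζ => hr ζ (hζ.trans (lt_add_one o))) (hr o (lt_add_one o))
  | limit o ho ih =>
    rw [System.run_limit _ _ ho, Machine.snap_limit _ _ ho]
    refine ⟨h.limit_eq, rfl, ?_⟩
    ext i n
    exact limsupBit_congr ho.bot_lt fun γ hγ =>
      congrFun₂ (ih γ hγ.2 fun ζ hζ => hr ζ (hζ.trans hγ.2)).tape_eq i n

theorem IsRow.isAt_blank (h : F.IsRow r M) : IsAt F.blank r (M.init zeroR) := by
  refine ⟨h.start_eq, rfl, ?_⟩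
  ext i n
  simp [blank, Machine.init, zeroR]

theorem done_run_iff : (F.system.run F.blank o).done r = true ↔
    ∃ ζ < o, (F.system.run F.blank ζ).state r = F.halt r := by
  refine eq_true_iff_exists_lt (b := fun o => (F.system.run F.blank o).done r) ?_
    (fun ζ _ => ?_) (fun ζ _ hζ => ?_) (le_refl o)
  · rw [System.run_zero]
    rfl
  · simp [step]
  · rw [System.run_limit _ _ hζ]
    rfl

theorem IsRow.fires (h : F.IsRow r M) (hr : r ≠ 0) (ho : M.haltsAt zeroR o) :
    F.Fires (F.system.run F.blank o) := by
  have hresets (c : Cfg) : c.resets r = false := by simp [Cfg.resets, hr]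
  have hhalt (ζ : Ordinal) :
      (F.system.run F.blank ζ).state r = F.halt r ↔ M.haltedAt zeroR ζ := by
    rw [(h.isAt_run h.isAt_blank fun _ _ => hresets _).state_eq, h.halt_eq,
      Fin.val_inj, Machine.haltedAt]
  refine ⟨r, hr, ?_, (hhalt o).2 ho.1⟩
  rw [← Bool.not_eq_true, done_run_iff]
  rintro ⟨ζ, hζ, hstate⟩
  exact ho.2 ζ hζ ((hhalt ζ).1 hstate)

/-- Each of the countably many machines fires at most once. -/
theorem exists_forall_not_fires (F : MachineFamily) :
    ∃ o : Ordinal, ∀ ζ ≥ o, ¬F.Fires (F.system.run F.blank ζ) := by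
  have hbound (r : ℕ) : ∃ o : Ordinal, ∀ ζ ≥ o,
      (F.system.run F.blank ζ).state r = F.halt r → (F.system.run F.blank ζ).done r = true := by
    by_cases hhalt : ∃ ζ, (F.system.run F.blank ζ).state r = F.halt r
    · obtain ⟨ζ, hζ⟩ := hhalt
      exact ⟨ζ + 1, fun η hη _ => done_run_iff.2 ⟨ζ, (lt_add_one ζ).trans_le hη, hζ⟩⟩
    · exact ⟨0, fun ζ _ hζ => absurd ⟨ζ, hζ⟩ hhalt⟩
  choose bound hdone using hbound
  refine ⟨⨆ r, bound r, fun ζ hζ => ?_⟩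
  rintro ⟨r, -, hr, hstate⟩
  exact Bool.false_ne_true
    (hr.symm.trans (hdone r ζ ((Ordinal.le_iSup bound r).trans hζ) hstate))

/-- The clock has just been started. -/
structure Fresh (F : MachineFamily) (c : Cfg) : Prop where
  restart_eq : c.restart = false
  fired_eq : c.fired = false
  state_eq : c.state 0 = F.start 0
  head_eq : c.head 0 = 0
  tape_eq : ∀ i n, c.tape 0 i n = false

theorem fresh_blank : F.Fresh F.blank := ⟨rfl, rfl, rfl, rfl, fun _ _ => rfl⟩

theorem fresh_step (hc : c.restart = true) : F.Fresh (F.step c) := by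
  constructor <;> simp [step, Cfg.resets, hc]

theorem fresh_run_add_one (h : (F.system.run c o).restart = true) :
    F.Fresh (F.system.run c (o + 1)) := by
  rw [System.run_add_one]
  exact fresh_step h

theorem restart_step (hc : c.restart = false) :
    (F.step c).restart = (c.state 0 == F.halt 0) := by
  simp [step, hc]

theorem resets_eq_false (hc : c.restart = false) (r : ℕ) : c.resets r = false := by
  simp [Cfg.resets, hc]

namespace Fresh

theorem isAt (h : F.Fresh c) (hM : F.IsRow 0 M) : IsAt c 0 (M.init zeroR) := by
  refine ⟨h.state_eq.trans hM.start_eq, h.head_eq, ?_⟩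
  ext i n
  simp [h.tape_eq, Machine.init, zeroR]

theorem restart_run (h : F.Fresh c) (hM : F.IsRow 0 M) (hα : M.haltsAt zeroR α) (ho : o ≤ α) :
    (F.system.run c o).restart = false := by
  induction o using WellFoundedLT.induction with
  | ind o ih =>
  rcases Ordinal.zero_or_succ_or_isSuccLimit o with rfl | ⟨o, rfl⟩ | hl
  · rw [System.run_zero]
    exact h.restart_eq
  · rw [Order.succ_eq_add_one] at *
    have hlt : o < o + 1 := lt_add_one o
    have hat := hM.isAt_run (h.isAt hM) (o := o) fun ζ hζ =>
      resets_eq_false (ih ζ (hζ.trans hlt) ((hζ.trans hlt).le.trans ho)) 0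
    rw [System.run_add_one]
    refine (restart_step (ih o hlt (hlt.le.trans ho))).trans ?_
    rw [beq_eq_false_iff_ne, hat.state_eq, hM.halt_eq, Fin.val_ne_iff]
    exact hα.2 o (hlt.trans_le ho)
  · rw [System.run_limit _ _ hl]
    exact limsupBit_of_eventually hl.bot_lt fun γ hγ => ih γ hγ.2 (hγ.2.le.trans ho)

theorem state_run_eq_halt_iff (h : F.Fresh c) (hM : F.IsRow 0 M) (hα : M.haltsAt zeroR α)
    (ho : o ≤ α) : (F.system.run c o).state 0 = F.halt 0 ↔ o = α := by
  have hat : IsAt (F.system.run c o) 0 (M.snap zeroR o) := hM.isAt_run (h.isAt hM)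
    fun _ hζ => resets_eq_false (h.restart_run hM hα (hζ.le.trans ho)) 0
  rw [hat.state_eq, hM.halt_eq, Fin.val_inj]
  constructor
  · exact fun hhalt => ho.eq_of_not_lt fun hlt => hα.2 o hlt hhalt
  · rintro rfl
    exact hα.1

theorem fired_run_iff (h : F.Fresh c) (hM : F.IsRow 0 M) (hα : M.haltsAt zeroR α) (ho : o ≤ α) :
    (F.system.run c o).fired = true ↔ ∃ ζ < o, F.Fires (F.system.run c ζ) := by
  refine eq_true_iff_exists_lt (b := fun o => (F.system.run c o).fired) ?_
    (fun ζ hζ => ?_) (fun ζ _ hζ => ?_) ho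
  · rw [System.run_zero]
    exact h.fired_eq
  · simp [step, h.restart_run hM hα hζ.le]
  · rw [System.run_limit _ _ hζ]
    rfl

theorem halted_run_iff (h : F.Fresh c) (hM : F.IsRow 0 M) (hα : M.haltsAt zeroR α)
    (ho : o ≤ α) :
    F.system.Halted (F.system.run c o) ↔ o = α ∧ ∀ ζ < α, ¬F.Fires (F.system.run c ζ) := by
  refine (and_iff_right (h.restart_run hM hα ho)).trans ?_
  rw [h.state_run_eq_halt_iff hM hα ho]
  refine and_congr_right ?_
  rintro rfl
  rw [← Bool.not_eq_true, h.fired_run_iff hM hα ho]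
  push Not
  rfl

theorem restart_run_add_one (h : F.Fresh c) (hM : F.IsRow 0 M) (hα : M.haltsAt zeroR α) :
    (F.system.run c (α + 1)).restart = true := by
  rw [System.run_add_one]
  refine (restart_step (h.restart_run hM hα le_rfl)).trans (beq_iff_eq.2 ?_)
  exact (h.state_run_eq_halt_iff hM hα le_rfl).2 rfl

end Fresh

theorem restart_or_fresh (hM : F.IsRow 0 M) (hα : M.haltsAt zeroR α) (o : Ordinal) :
    (F.system.run F.blank o).restart = true ∨
      ∃ β, F.Fresh (F.system.run F.blank β) ∧ o ∈ Set.Icc β (β + α) := by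
  have hrestart {β : Ordinal} (hβ : F.Fresh (F.system.run F.blank β)) :
      (F.system.run F.blank (β + α + 1)).restart = true := by
    rw [add_assoc, System.run_add]
    exact hβ.restart_run_add_one hM hα
  induction o using Ordinal.limitRecOn with
  | zero => exact .inr ⟨0, by rw [System.run_zero]; exact fresh_blank, le_rfl, zero_le⟩
  | add_one o ih =>
    rcases ih with ho | ⟨β, hβ, hle, hβα⟩
    · exact .inr ⟨o + 1, fresh_run_add_one ho, le_rfl, le_self_add⟩
    · rcases hβα.eq_or_lt with rfl | hlt
      · exact .inl (hrestart hβ)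
      · exact .inr ⟨β, hβ, hle.trans (lt_add_one o).le, Order.add_one_le_of_lt hlt⟩
  | limit o ho ih =>
    rw [or_iff_not_imp_left, System.run_limit _ _ ho]
    intro hlim
    obtain ⟨ζ, hζ, hno⟩ : ∃ ζ < o, ∀ γ ∈ Set.Ico ζ o,
        ¬(F.system.run F.blank γ).restart = true := by
      simpa only [not_forall, not_exists, not_and, exists_prop, Cfg.bit]
        using mt limsupBit_eq_true.2 hlim
    rcases ih ζ hζ with hrest | ⟨β, hβ, hβζ, hζβ⟩
    · exact absurd hrest (hno ζ ⟨le_rfl, hζ⟩)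
    · refine ⟨β, hβ, hβζ.trans hζ.le, le_of_not_gt fun hlt => ?_⟩
      exact hno _ ⟨hζβ.trans (lt_add_one _).le, ho.add_one_lt hlt⟩ (hrestart hβ)

theorem exists_fresh_ge (hM : F.IsRow 0 M) (hα : M.haltsAt zeroR α) (o : Ordinal) :
    ∃ β ≥ o, F.Fresh (F.system.run F.blank β) := by
  suffices ∃ ζ ≥ o, (F.system.run F.blank ζ).restart = true by
    obtain ⟨ζ, hζ, hrestart⟩ := this
    exact ⟨ζ + 1, hζ.trans (lt_add_one ζ).le, fresh_run_add_one hrestart⟩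
  rcases restart_or_fresh hM hα o with ho | ⟨β, hβ, -, hβα⟩
  · exact ⟨o, le_rfl, ho⟩
  · refine ⟨β + (α + 1), hβα.trans (add_le_add_right (lt_add_one α).le β), ?_⟩
    rw [System.run_add]
    exact hβ.restart_run_add_one hM hα

theorem exists_halted (hM : F.IsRow 0 M) (hα : M.haltsAt zeroR α) :
    ∃ o, F.system.Halted (F.system.run F.blank o) := by
  obtain ⟨o, hquiet⟩ := exists_forall_not_fires F
  obtain ⟨β, ho, hβ⟩ := exists_fresh_ge hM hα o
  refine ⟨β + α, ?_⟩
  rw [System.run_add]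
  refine (hβ.halted_run_iff hM hα le_rfl).2 ⟨rfl, fun ζ _ => ?_⟩
  rw [← System.run_add]
  exact hquiet _ (ho.trans le_self_add)

theorem exists_haltsAt (hM : F.IsRow 0 M) (hα : M.haltsAt zeroR α) :
    ∃ β, F.system.HaltsAt F.blank (β + α) ∧
      ∀ ζ < α, ¬F.Fires (F.system.run F.blank (β + ζ)) := by
  obtain ⟨o, ho, hmin⟩ :=
    WellFounded.has_min Ordinal.lt_wf {o | F.system.Halted (F.system.run F.blank o)}
      (exists_halted hM hα)
  obtain ⟨β, hβ, hβo, hoβ⟩ := (restart_or_fresh hM hα o).resolve_left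
    (by rw [Bool.not_eq_true]; exact ho.1)
  obtain ⟨ζ, rfl⟩ := le_iff_exists_add.1 hβo
  have hhalted : F.system.Halted (F.system.run (F.system.run F.blank β) ζ) := by
    rw [← System.run_add]
    exact ho
  obtain ⟨rfl, hquiet⟩ := (hβ.halted_run_iff hM hα (by simpa using hoβ)).1 hhalted
  refine ⟨β, ⟨ho, fun o' ho' h => hmin o' h ho'⟩, fun ξ hξ => ?_⟩
  rw [System.run_add]
  exact hquiet ξ hξ

theorem exists_clockable_ge (F : MachineFamily) (h : F.system.HaltsAt F.blank o) :
    ∃ ξ, Clockable ξ ∧ o ≤ ξ := by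
  obtain ⟨o₁, ho₁, h₁⟩ := F.simulation.exists_haltsAt h
  obtain ⟨o₂, ho₂, h₂⟩ := F.toTaskMachine.simulation.exists_haltsAt h₁
  obtain ⟨o₃, ho₃, h₃⟩ := F.toTaskMachine.toPrimrecMachine.simulation.exists_haltsAt h₂
  obtain ⟨o₄, ho₄, h₄⟩ :=
    F.toTaskMachine.toPrimrecMachine.toStackMachine.simulation.exists_haltsAt h₃
  obtain ⟨ξ, hξ, h₅⟩ :=
    F.toTaskMachine.toPrimrecMachine.toStackMachine.toTrackMachine.simulation.exists_haltsAt h₄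
  exact ⟨ξ, ⟨_, (Machine.haltsAt_iff _ _ _).2 h₅⟩,
    ho₁.trans (ho₂.trans (ho₃.trans (ho₄.trans hξ)))⟩

end MachineFamily
end ITTM

/-- **Big Gaps Theorem.** For every clockable ordinal `α` there are gaps of
size at least `α` in the clockable ordinals: there is an ordinal `β` such
that no ordinal `δ` with `β ≤ δ < β + α` is clockable, while some clockable
ordinal lies at or beyond `β + α`. -/
theorem big_gaps (α : Ordinal) (h : ITTM.Clockable α) :
    ∃ β : Ordinal,
      (∀ δ : Ordinal, β ≤ δ → δ < β + α → ¬ ITTM.Clockable δ) ∧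
      (∃ ξ : Ordinal, ITTM.Clockable ξ ∧ β + α ≤ ξ) := by
  obtain ⟨clock, hclock⟩ := h
  obtain ⟨e, hrow, -⟩ := ITTM.MachineFamily.exists_code clock
  obtain ⟨β, hhalts, hgap⟩ := ITTM.MachineFamily.exists_haltsAt hrow hclock
  refine ⟨β, ?_, ITTM.MachineFamily.exists_clockable_ge _ hhalts⟩
  rintro δ hβδ hδ ⟨M, hM⟩
  obtain ⟨ζ, rfl⟩ := le_iff_exists_add.1 hβδ
  obtain ⟨n, -, hn⟩ := ITTM.MachineFamily.exists_code M
  exact hgap ζ (by simpa using hδ) ((hn e).fires (Nat.succ_ne_zero n) hM)
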